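/- arXiv:1110.4523 — 7 statements merged into one kernel-verified Lean document; each statement's English description precedes it below -/
import Mathlib

section
/- Let G = (V ∪ {s}, E) be a finite sandpile graph, W ⊆ V, ξ generalized minimal on W, and η ∈ R_G with η_W = ξ. Let V_1, …, V_K be the connected components of the induced subgraph of G on (V ∪ {s}) \ W that do not contain s, and W' = W ∪ V_1 ∪ ⋯ ∪ V_K. Let B ⊆ V be a burnt set with V \ W' ⊆ B ⊆ V \ (V_1 ∪ ⋯ ∪ V_K) such that no vertex of B ∩ W is adjacent to any V_j, and suppose y ∈ W \ B is burnable for η given {s} ∪ B and y is adjacent to V_j. Then there is a burning sequence for η from the burnt set {s} ∪ B ∪ {y} that burns every vertex of V_j and no other vertex; in particular all of V_j can be burnt after y without burning any further vertex of W. -/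
open scoped Classical

namespace Sandpile

/-- A finite sandpile multigraph on vertex set `α` (which plays the role of `V ∪ {s}`),
given by a distinguished sink and symmetric edge multiplicities. -/
structure Graph (α : Type*) where
  sink : α
  b : α → α → ℕ

namespace Graph

variable {α : Type*} [Fintype α] [DecidableEq α] (G : Graph α)

/-- The non-sink vertices (the set `V`). -/
def VSet : Finset α := Finset.univ.erase G.sink

/-- Degree restricted to a finite set of vertices: `deg_F(x) = ∑_{y ∈ F} b_{xy}`. -/
def degIn (F : Finset α) (x : α) : ℕ := ∑ y ∈ F, G.b x y

/-- Total degree `deg_G(x)`. -/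
def deg (x : α) : ℕ := ∑ y, G.b x y

/-- `G` is a genuine finite sandpile graph: symmetric multiplicities, no loops, connected. -/
def IsSandpileGraph : Prop :=
  (∀ x y, G.b x y = G.b y x) ∧ (∀ x, G.b x x = 0) ∧
    ∀ x y : α, Relation.ReflTransGen (fun u v => 0 < G.b u v) x y

/-- Connectivity of the subgraph induced on the vertex set `S`. -/
def ConnectedOn (S : Set α) : Prop :=
  ∀ x ∈ S, ∀ y ∈ S,
    Relation.ReflTransGen (fun u v => u ∈ S ∧ v ∈ S ∧ 0 < G.b u v) x y

/-- A sandpile is stable if every non-sink vertex carries fewer particles than its degree. -/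
def Stable (η : α → ℕ) : Prop := ∀ x ∈ G.VSet, η x < G.deg x

/-- `η` is ample for `F` if some vertex of `F` has at least `deg_F` particles. -/
def AmpleFor (η : α → ℕ) (F : Finset α) : Prop := ∃ x ∈ F, G.degIn F x ≤ η x

/-- Dhar's burning test: recurrent = stable and ample for every nonempty `F ⊆ V`. -/
def Recurrent (η : α → ℕ) : Prop :=
  G.Stable η ∧ ∀ F ⊆ G.VSet, F.Nonempty → G.AmpleFor η F

/-- Remove one particle at `w` (`η - δ_w`). -/
def SubOne (η : α → ℕ) (w : α) : α → ℕ := fun x => if x = w then η x - 1 else η x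

/-- `η` and `ξ` agree on `W` (restriction `η_W = ξ_W`). -/
def EqOn (η ξ : α → ℕ) (W : Finset α) : Prop := ∀ x ∈ W, η x = ξ x

/-- `ξ` is (generalized) minimal on `W`: it extends to a recurrent sandpile, and no
recurrent extension stays recurrent after removing a particle from a vertex of `W`.
(`η - δ_w ∉ R_G` holds automatically if `η w = 0`, as then `η - δ_w` is not a configuration.) -/
def Minimal (W : Finset α) (ξ : α → ℕ) : Prop :=
  (∃ η, G.Recurrent η ∧ EqOn η ξ W) ∧
    ∀ η, G.Recurrent η → EqOn η ξ W → ∀ w ∈ W, ¬(1 ≤ η w ∧ G.Recurrent (SubOne η w))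

/-- `ν_G[P]`: the uniform probability of the event `P` under the uniform measure on
recurrent configurations (configurations are normalized to vanish at the sink). -/
noncomputable def prob (P : (α → ℕ) → Prop) : ℝ :=
  (Nat.card {η : α → ℕ // η G.sink = 0 ∧ G.Recurrent η ∧ P η} : ℝ) /
    (Nat.card {η : α → ℕ // η G.sink = 0 ∧ G.Recurrent η} : ℝ)

/-- The graph Laplacian with the sink row and column deleted. -/
noncomputable def lapRed :
    Matrix {x : α // x ≠ G.sink} {x : α // x ≠ G.sink} ℝ :=
  Matrix.of fun x y =>
    if (x : α) = (y : α) then (G.deg ↑x : ℝ) else -(G.b ↑x ↑y : ℝ)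

/-- `H = (Δ')⁻¹`, extended by `0` on the sink. -/
noncomputable def Hfun (x y : α) : ℝ :=
  if hx : x = G.sink then 0
  else if hy : y = G.sink then 0
  else (G.lapRed)⁻¹ ⟨x, hx⟩ ⟨y, hy⟩

/-- Oriented edges of the multigraph `G`: an edge from `p.1` to `p.2.1`, with copy
index `p.2.2` (parallel edges are distinct). -/
abbrev OEdge (G : Graph α) : Type _ := {p : α × α × ℕ // p.2.2 < G.b p.1 p.2.1}

/-- `K_G(e,f) = δ_{ef} - Y_G(e,f)` where `Y_G` is the transfer current matrix. -/
noncomputable def Kmat (e f : G.OEdge) : ℝ :=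
  (if e = f then 1 else 0) -
    (G.Hfun e.1.1 f.1.1 - G.Hfun e.1.1 f.1.2.1 - G.Hfun e.1.2.1 f.1.1 +
      G.Hfun e.1.2.1 f.1.2.1)

/-- Unburnt sets of phase one of the burning algorithm based on `Q`:
`U_0 = V`, `U_i = U_{i-1} \ B_i` with `B_i = {x ∈ U_{i-1} \ Q : η x ≥ deg_{U_{i-1}} x}`. -/
def U1 (η : α → ℕ) (Q : Finset α) : ℕ → Finset α
  | 0 => G.VSet
  | i + 1 => (U1 η Q i).filter fun x => x ∈ Q ∨ η x < G.degIn (U1 η Q i) x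

/-- The final unburnt set `U^{(1)}_I` of phase one (the sequence `U1` is decreasing,
hence stabilizes after at most `|α|` steps). -/
def U1lim (η : α → ℕ) (Q : Finset α) : Finset α := G.U1 η Q (Fintype.card α)

/-- Unburnt sets of phase two of the burning algorithm based on `Q`. -/
def U2 (η : α → ℕ) (Q : Finset α) : ℕ → Finset α
  | 0 => G.U1lim η Q
  | i + 1 => (U2 η Q i).filter fun x => η x < G.degIn (U2 η Q i) x

/-- Recurrence in the wired graph `G_W` (note `deg_{G_W}(x) = deg_G(x)` for `x ∈ W`,
and `deg_F` for `F ⊆ W` is the same in `G_W` and `G`). -/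
def WiredRecurrent (W : Finset α) (ξ : α → ℕ) : Prop :=
  (∀ x ∈ W, ξ x < G.deg x) ∧ ∀ F ⊆ W, F.Nonempty → ∃ x ∈ F, G.degIn F x ≤ ξ x

/-- `ξ` is minimal in the wired graph `G_W`. -/
def WiredMinimal (W : Finset α) (ξ : α → ℕ) : Prop :=
  G.WiredRecurrent W ξ ∧ ∀ w ∈ W, ¬(1 ≤ ξ w ∧ G.WiredRecurrent W (SubOne ξ w))

/-- Entry points `E(ξ,W)` of `ξ ∈ R_{G_W}`: vertices burnable at the first step. -/
def entryPoints (W : Finset α) (ξ : α → ℕ) : Finset α :=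
  W.filter fun w => G.degIn W w ≤ ξ w

/-- `x` is burnable given the burnt set `S`: `η(x) ≥ deg_G(x) − ∑_{y ∈ S} b_{xy}`. -/
def Burnable (η : α → ℕ) (S : Finset α) (x : α) : Prop :=
  G.degIn (Finset.univ \ S) x ≤ η x

/-- A burning sequence starting from the burnt set `S`. -/
def IsBurnSeq (η : α → ℕ) : Finset α → List α → Prop
  | _, [] => True
  | S, x :: l => x ∉ S ∧ G.Burnable η S x ∧ IsBurnSeq η (insert x S) l

/-- `B` is a burnt set for `η`: some burning sequence from `{s}` burns exactly `B`. -/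
def IsBurntSet (η : α → ℕ) (B : Finset α) : Prop :=
  ∃ l : List α, G.IsBurnSeq η {G.sink} l ∧ l.toFinset = B

/-- Reachability within the vertex set `S`. -/
def ReachIn (S : Set α) (x y : α) : Prop :=
  Relation.ReflTransGen (fun u v => u ∈ S ∧ v ∈ S ∧ 0 < G.b u v) x y

/-- `C` is a connected component of the subgraph induced on `(V ∪ {s}) \ W`
that does not contain the sink. -/
def IsHoleComp (W C : Finset α) : Prop :=
  C.Nonempty ∧ G.sink ∉ C ∧
    ∀ x ∈ C, ∀ y : α, y ∈ C ↔ y ∉ W ∧ G.ReachIn {a : α | a ∉ W} x y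

/-- Adjacency induced by a finite set `t` of (undirected, indexed) edges. -/
def edgeRel (t : Finset (Sym2 α × ℕ)) (u v : α) : Prop := ∃ k : ℕ, (s(u, v), k) ∈ t

/-- `t` is a spanning tree of the multigraph `G`: it consists of edges of `G`
(parallel edges distinct), it spans (connected), and every edge is a bridge
(equivalently, it is acyclic). -/
def IsSpanningTree (t : Finset (Sym2 α × ℕ)) : Prop :=
  (∀ p ∈ t, ∃ x y : α, p.1 = s(x, y) ∧ p.2 < G.b x y) ∧
  (∀ u v : α, Relation.ReflTransGen (edgeRel t) u v) ∧
  ∀ p ∈ t, ∀ x y : α, p.1 = s(x, y) →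
    ¬ Relation.ReflTransGen (edgeRel (t.erase p)) x y

/-- Adjacency induced by a set of (undirected, indexed) edges. -/
def edgeRelSet (t : Set (Sym2 α × ℕ)) (u v : α) : Prop := ∃ k : ℕ, (s(u, v), k) ∈ t

/-- Set version of `IsSpanningTree`. -/
def IsSpanningTreeSet (t : Set (Sym2 α × ℕ)) : Prop :=
  (∀ p ∈ t, ∃ x y : α, p.1 = s(x, y) ∧ p.2 < G.b x y) ∧
  (∀ u v : α, Relation.ReflTransGen (edgeRelSet t) u v) ∧
  ∀ p ∈ t, ∀ x y : α, p.1 = s(x, y) →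
    ¬ Relation.ReflTransGen (edgeRelSet (t \ {p})) x y

/-- The step at which `x` burns in phase one (0 for the sink; `sInf ∅ = 0` if `x`
never burns in phase one). -/
noncomputable def p1time (η : α → ℕ) (Q : Finset α) (x : α) : ℕ :=
  sInf {i : ℕ | x ∉ G.U1 η Q i}

/-- The step at which `x` burns in phase two. -/
noncomputable def p2time (η : α → ℕ) (Q : Finset α) (x : α) : ℕ :=
  sInf {i : ℕ | x ∉ G.U2 η Q i}

/-- Vertices burnt at step `i` of phase one (`B^{(1)}_0 = {s}`). -/
def B1 (η : α → ℕ) (Q : Finset α) : ℕ → Finset α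
  | 0 => {G.sink}
  | i + 1 => G.U1 η Q i \ G.U1 η Q (i + 1)

/-- Vertices burnt at step `i` of phase two (`B^{(2)}_0` = everything burnt in phase
one, including the sink). -/
def B2 (η : α → ℕ) (Q : Finset α) : ℕ → Finset α
  | 0 => Finset.univ \ G.U1lim η Q
  | i + 1 => G.U2 η Q i \ G.U2 η Q (i + 1)

/-- The set `B^{(p)}_{i-1}` of vertices burnt at the step preceding the step at which
`x` burns (in the appropriate phase). -/
noncomputable def prevBurnt (η : α → ℕ) (Q : Finset α) (x : α) : Finset α :=
  if x ∈ G.U1lim η Q then G.B2 η Q (G.p2time η Q x - 1)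
  else G.B1 η Q (G.p1time η Q x - 1)

/-- The set `D = B^{(p)}_0 ∪ ⋯ ∪ B^{(p)}_{i-1}` of vertices burnt strictly before `x`
in the phase in which `x` burns. -/
noncomputable def burntBefore (η : α → ℕ) (Q : Finset α) (x : α) : Finset α :=
  if x ∈ G.U1lim η Q then Finset.univ \ G.U2 η Q (G.p2time η Q x - 1)
  else Finset.univ \ G.U1 η Q (G.p1time η Q x - 1)

/-- `j = η(x) − deg_G(x) + n_x` with `n_x = ∑_{y ∈ D} b_{xy}`. -/
noncomputable def jX (η : α → ℕ) (Q : Finset α) (x : α) : ℕ :=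
  η x + G.degIn (G.burntBefore η Q x) x - G.deg x

/-- The defining property of the edge `e_x` of the burning bijection based on `Q`:
`e_x` has tail `x`, head burnt at the previous step, and exactly `j` smaller elements
of `P_x` under the given edge order `lt x`. -/
def EdgeSpec (lt : α → G.OEdge → G.OEdge → Prop) (η : α → ℕ) (Q : Finset α)
    (x : α) (e : G.OEdge) : Prop :=
  e.1.1 = x ∧ e.1.2.1 ∈ G.prevBurnt η Q x ∧
    {f : G.OEdge | f.1.1 = x ∧ f.1.2.1 ∈ G.prevBurnt η Q x ∧ lt x f e}.ncard =
      G.jX η Q x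

/-- The (oriented) spanning tree `t(η) = {e_x : x ∈ V}` assigned to `η` by the
burning bijection based on `Q`. -/
def treeOf (lt : α → G.OEdge → G.OEdge → Prop) (η : α → ℕ) (Q : Finset α) :
    Set G.OEdge :=
  {e | ∃ x ∈ G.VSet, G.EdgeSpec lt η Q x e}

/-- Forget the orientation of an oriented edge. -/
def undir (e : G.OEdge) : Sym2 α × ℕ := (s(e.1.1, e.1.2.1), e.1.2.2)

/-- Total burning order: phase-one vertices first (at their phase-one step), then
phase-two vertices. -/
noncomputable def burnOrder (η : α → ℕ) (Q : Finset α) (x : α) : ℕ :=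
  if x ∈ G.U1lim η Q then Fintype.card α + 1 + G.p2time η Q x else G.p1time η Q x

/-- Edge multiplicities of the auxiliary graph `G_W^*` (on vertex set `W ∪ {s}`):
`b*_{xy} = b_{xy}` for `x,y ∈ W`; `b*_{xs} = ∑_{z ∉ W} b_{xz}` for `x ∈ Q` and
`b*_{xs} = 0` for `x ∈ W \ Q`. -/
def bstar (Q W : Finset α) (x y : α) : ℕ :=
  if x ∈ W ∧ y ∈ W then G.b x y
  else if x ∈ W ∧ y = G.sink then
    if x ∈ Q then ∑ z ∈ Finset.univ \ W, G.b x z else 0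
  else if y ∈ W ∧ x = G.sink then
    if y ∈ Q then ∑ z ∈ Finset.univ \ W, G.b z y else 0
  else 0

/-- Recurrence in the auxiliary graph `G_W^*`. -/
def StarRecurrent (Q W : Finset α) (ζ : α → ℕ) : Prop :=
  (∀ x ∈ W, ζ x < ∑ y ∈ insert G.sink W, G.bstar Q W x y) ∧
    ∀ F ⊆ W, F.Nonempty → ∃ x ∈ F, (∑ y ∈ F, G.bstar Q W x y) ≤ ζ x

end Graph

end Sandpile

open Sandpile

namespace Sandpile.Graph

/-- Monotonicity of the restricted degree. -/
theorem aux_degIn_mono {α : Type*} [Fintype α] [DecidableEq α] (G : Graph α)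
    {F F' : Finset α} (h : F ⊆ F') (x : α) : G.degIn F x ≤ G.degIn F' x :=
  Finset.sum_le_sum_of_subset h

/-- If `F ⊆ F'` misses a neighbour `u ∈ F'` of `x`, the degree strictly drops. -/
theorem aux_degIn_lt {α : Type*} [Fintype α] [DecidableEq α] (G : Graph α)
    {F F' : Finset α} (h : F ⊆ F') {x u : α} (hu : u ∈ F') (hu' : u ∉ F)
    (hb : 0 < G.b x u) : G.degIn F x < G.degIn F' x :=
  Finset.sum_lt_sum_of_subset h hu hu' hb (fun _ _ _ => Nat.zero_le _)

/-- Greedy burning inside an allowed set `A`. -/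
theorem aux_greedy {α : Type*} [Fintype α] [DecidableEq α] (G : Graph α) (η : α → ℕ) :
    ∀ (n : ℕ) (A S : Finset α), A.card = n → Disjoint A S →
      ∃ l : List α, G.IsBurnSeq η S l ∧ l.toFinset ⊆ A ∧
        ∀ x ∈ A, x ∉ l.toFinset → ¬ G.Burnable η (S ∪ l.toFinset) x := by
  intro n
  induction n with
  | zero =>
    intro A S hA _
    refine ⟨[], trivial, by simp, ?_⟩
    rw [Finset.card_eq_zero] at hA
    subst hA
    simp
  | succ n ih =>
    intro A S hA hAS
    by_cases h : ∃ x ∈ A, G.Burnable η S x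
    · obtain ⟨x, hxA, hx⟩ := h
      have hxS : x ∉ S := Finset.disjoint_left.1 hAS hxA
      obtain ⟨l, hl1, hl2, hl3⟩ := ih (A.erase x) (insert x S)
        (by rw [Finset.card_erase_of_mem hxA, hA]; rfl)
        (by
          rw [Finset.disjoint_left] at hAS ⊢
          intro a ha
          rw [Finset.mem_erase] at ha
          simp only [Finset.mem_insert, not_or]
          exact ⟨ha.1, hAS ha.2⟩)
      refine ⟨x :: l, ⟨hxS, hx, hl1⟩, ?_, ?_⟩
      · intro a ha
        simp only [List.toFinset_cons, Finset.mem_insert] at ha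
        rcases ha with rfl | ha
        · exact hxA
        · exact Finset.mem_of_mem_erase (hl2 ha)
      · intro a haA ha
        simp only [List.toFinset_cons, Finset.mem_insert, not_or] at ha
        have := hl3 a (Finset.mem_erase.2 ⟨ha.1, haA⟩) ha.2
        have e : S ∪ (x :: l).toFinset = insert x S ∪ l.toFinset := by
          ext a
          simp only [List.toFinset_cons, Finset.mem_insert, Finset.mem_union]
          tauto
        rwa [e]
    · push Not at h
      refine ⟨[], trivial, by simp, ?_⟩
      intro x hx _
      simpa using h x hx

/-- The first vertex of `F` in a burning sequence meeting `F`. -/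
theorem aux_first {α : Type*} [Fintype α] [DecidableEq α] (G : Graph α) (η : α → ℕ)
    (F : Finset α) : ∀ (l : List α) (S : Finset α), G.IsBurnSeq η S l → Disjoint F S →
      (∃ x ∈ F, x ∈ l) →
      ∃ x ∈ F, x ∈ l ∧ ∃ S' : Finset α, S' ⊆ S ∪ l.toFinset ∧ Disjoint F S' ∧ x ∉ S' ∧
        G.Burnable η S' x := by
  intro l
  induction l with
  | nil => rintro S _ _ ⟨x, _, hx⟩; simp at hx
  | cons a l ih =>
    rintro S ⟨haS, hab, hl⟩ hFS ⟨x, hxF, hx⟩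
    by_cases haF : a ∈ F
    · exact ⟨a, haF, by simp, S, Finset.subset_union_left, hFS, haS, hab⟩
    · have hxl : x ∈ l := by
        rcases List.mem_cons.1 hx with rfl | h
        · exact absurd hxF haF
        · exact h
      obtain ⟨z, hzF, hzl, S', h1, h2, h3, h4⟩ := ih (insert a S) hl
        (by rw [Finset.disjoint_insert_right]; exact ⟨haF, hFS⟩) ⟨x, hxF, hxl⟩
      refine ⟨z, hzF, List.mem_cons_of_mem _ hzl, S', ?_, h2, h3, h4⟩
      intro c hc
      have := h1 hc
      simp only [List.toFinset_cons, Finset.mem_insert, Finset.mem_union] at this ⊢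
      tauto

/-- A path from inside `P` to outside `P` crosses the boundary. -/
theorem aux_cross {α : Type*} {r : α → α → Prop} {P : α → Prop} {x z : α}
    (h : Relation.ReflTransGen r x z) (hx : P x) (hz : ¬ P z) :
    ∃ u v, Relation.ReflTransGen r x u ∧ r u v ∧ P u ∧ ¬ P v := by
  induction h with
  | refl => exact absurd hx hz
  | @tail b c h1 h2 ih =>
    by_cases hb : P b
    · exact ⟨b, c, h1, h2, hb, hz⟩
    · exact ih hb

/-- If `F` meets a hole component `C`, and `y ∉ F` is a neighbour of `C`, then some vertex
of `F ∩ C` has a neighbour outside `F`. -/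
theorem aux_hole {α : Type*} [Fintype α] [DecidableEq α] (G : Graph α)
    (hG : G.IsSandpileGraph) (W C F : Finset α) (hC : G.IsHoleComp W C) (y : α)
    (hyF : y ∉ F) (hyC : ∃ z ∈ C, 0 < G.b y z) (hF : ∃ x ∈ F, x ∈ C) :
    ∃ x ∈ F, x ∈ C ∧ ∃ v, v ∉ F ∧ 0 < G.b x v := by
  obtain ⟨z, hzC, hz⟩ := hyC
  obtain ⟨x, hxF, hxC⟩ := hF
  by_cases hzF : z ∈ F
  · exact ⟨z, hzF, hzC, y, hyF, by rw [hG.1]; exact hz⟩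
  · obtain ⟨_, hr⟩ := (hC.2.2 x hxC z).1 hzC
    obtain ⟨u, v, h1, h2, h3, h4⟩ := aux_cross (P := fun a => a ∈ F) hr hxF hzF
    exact ⟨u, h3, (hC.2.2 x hxC u).2 ⟨h2.1, h1⟩, v, h4, h2.2.2⟩

end Sandpile.Graph

/-- Lemma `burn_hole`. In the burning of a recurrent extension of a
generalized minimal configuration, once a vertex `y ∈ W` adjacent to a hole component
`C` becomes burnable (with all of `V \ W'` already burnt and no burnt vertex of `W`
adjacent to any hole), burning `y` allows all of `C` (and nothing else) to be burnt. -/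
theorem statement_10 {α : Type*} [Fintype α] [DecidableEq α] (G : Sandpile.Graph α)
    (hG : G.IsSandpileGraph) (W : Finset α) (hWne : W.Nonempty) (hWs : G.sink ∉ W)
    (ξ : α → ℕ) (hstable : ∀ x ∈ W, ξ x < G.deg x) (hmin : G.Minimal W ξ)
    (η : α → ℕ) (hη : G.Recurrent η) (hηW : Graph.EqOn η ξ W)
    (B : Finset α) (hB : G.IsBurntSet η B) (hBV : B ⊆ G.VSet)
    (hB1 : ∀ x ∈ G.VSet, x ∉ W → (∀ C : Finset α, G.IsHoleComp W C → x ∉ C) → x ∈ B)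
    (hB2 : ∀ C : Finset α, G.IsHoleComp W C → ∀ x ∈ B, x ∉ C)
    (hB3 : ∀ C : Finset α, G.IsHoleComp W C → ∀ x ∈ B, x ∈ W → ∀ z ∈ C, G.b x z = 0)
    (y : α) (hyW : y ∈ W) (hyB : y ∉ B)
    (hyburn : G.Burnable η (insert G.sink B) y)
    (C : Finset α) (hC : G.IsHoleComp W C) (hyC : ∃ z ∈ C, 0 < G.b y z) :
    ∃ l : List α, G.IsBurnSeq η (insert y (insert G.sink B)) l ∧ l.toFinset = C := by
  classical
  have hys : y ≠ G.sink := fun h => hWs (h ▸ hyW)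
  have hyC' : y ∉ C := by
    intro h
    exact ((hC.2.2 y h y).1 h).1 hyW
  obtain ⟨l1, hl1, hD, hmax1⟩ := Graph.aux_greedy G η C.card C (insert y (insert G.sink B)) rfl
    (by
      rw [Finset.disjoint_left]
      intro a ha
      simp only [Finset.mem_insert, not_or]
      exact ⟨fun h => hyC' (h ▸ ha), fun h => hC.2.1 (h ▸ ha), fun h => hB2 C hC a h ha⟩)
  refine ⟨l1, hl1, ?_⟩
  by_contra hne
  set D := l1.toFinset with hDdef
  set S0 := insert y (insert G.sink B) ∪ D with hS0
  have hmS0 : ∀ a, a ∈ S0 ↔ a = y ∨ a = G.sink ∨ a ∈ B ∨ a ∈ D := by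
    intro a
    simp only [hS0, Finset.mem_union, Finset.mem_insert]
    tauto
  obtain ⟨u0, hu0C, hu0D⟩ : ∃ u ∈ C, u ∉ D := by
    by_contra h
    push Not at h
    exact hne (Finset.Subset.antisymm hD h)
  obtain ⟨l2, hl2, hl2A, hmax2⟩ := Graph.aux_greedy G η _
    (Finset.univ \ (S0 ∪ C)) S0 rfl
    (by
      rw [Finset.disjoint_left]
      intro a ha
      simp only [Finset.mem_sdiff, Finset.mem_union, not_or] at ha
      exact ha.2.1)
  have hl2m : ∀ a ∈ l2, a ∉ S0 ∧ a ∉ C := by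
    intro a ha
    have := hl2A (List.mem_toFinset.2 ha)
    simpa only [Finset.mem_sdiff, Finset.mem_univ, true_and, Finset.mem_union, not_or] using this
  have hu0S0 : ∀ u ∈ C, u ∉ D → u ∉ S0 := by
    intro u hu huD h
    rcases (hmS0 u).1 h with h | h | h | h
    · exact hyC' (h ▸ hu)
    · exact hC.2.1 (h ▸ hu)
    · exact hB2 C hC u h hu
    · exact huD h
  -- the next burnable vertex lies in `C`
  obtain ⟨u, huF, hub⟩ := hη.2 (Finset.univ \ (S0 ∪ l2.toFinset))
    (by
      intro a ha
      simp only [Finset.mem_sdiff, Finset.mem_univ, true_and, Finset.mem_union, not_or] at ha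
      simp only [Graph.VSet, Finset.mem_erase, Finset.mem_univ, and_true]
      exact fun h => ha.1 ((hmS0 a).2 (Or.inr (Or.inl h))))
    ⟨u0, by
      simp only [Finset.mem_sdiff, Finset.mem_univ, true_and, Finset.mem_union, not_or,
        List.mem_toFinset]
      exact ⟨hu0S0 u0 hu0C hu0D, fun h => (hl2m u0 h).2 hu0C⟩⟩
  simp only [Finset.mem_sdiff, Finset.mem_univ, true_and, Finset.mem_union, not_or] at huF
  have huC : u ∈ C := by
    by_contra h
    refine hmax2 u ?_ huF.2 hub
    simp only [Finset.mem_sdiff, Finset.mem_univ, true_and, Finset.mem_union, not_or]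
    exact ⟨huF.1, h⟩
  have huD : u ∉ D := fun h => huF.1 ((hmS0 u).2 (Or.inr (Or.inr (Or.inr h))))
  have hunb : ¬ G.Burnable η S0 u := hmax1 u huC huD
  obtain ⟨w, hwl, hwu⟩ : ∃ w ∈ l2, 0 < G.b u w := by
    by_contra h
    push Not at h
    apply hunb
    refine le_trans (le_of_eq ?_) hub
    symm
    refine Finset.sum_subset ?_ ?_
    · intro a ha
      simp only [Finset.mem_sdiff, Finset.mem_univ, true_and, Finset.mem_union, not_or] at ha ⊢
      exact ha.1
    · intro a ha ha'
      simp only [Finset.mem_sdiff, Finset.mem_univ, true_and, Finset.mem_union, not_or,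
        not_and, not_not, List.mem_toFinset] at ha ha'
      exact Nat.le_zero.1 (h a (ha' ha))
  have hwS0 := (hl2m w hwl).1
  have hwC := (hl2m w hwl).2
  have hwW : w ∈ W := by
    by_contra h
    apply hwC
    have huW := ((hC.2.2 u huC u).1 huC).1
    exact (hC.2.2 u huC w).2 ⟨h, Relation.ReflTransGen.single ⟨huW, h, hwu⟩⟩
  have hwu' : 0 < G.b w u := by rw [hG.1]; exact hwu
  have hwy : w ≠ y := fun h => hwS0 ((hmS0 w).2 (Or.inl h))
  have hws : w ≠ G.sink := fun h => hwS0 ((hmS0 w).2 (Or.inr (Or.inl h)))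
  have hwB : w ∉ B := fun h => hwS0 ((hmS0 w).2 (Or.inr (Or.inr (Or.inl h))))
  have hCV : ∀ a ∈ C, a ∈ G.VSet := by
    intro a ha
    simp only [Graph.VSet, Finset.mem_erase, Finset.mem_univ, and_true]
    exact fun h => hC.2.1 (h ▸ ha)
  -- the modified configuration
  set η' : α → ℕ := fun x => if x ∈ C then G.deg x - 1 else η x with hη'
  have hη'C : ∀ a ∈ C, η' a = G.deg a - 1 := fun a ha => by simp [hη', ha]
  have hη'n : ∀ a, a ∉ C → η' a = η a := fun a ha => by simp [hη', ha]
  have hle : ∀ a ∈ G.VSet, η a ≤ η' a := by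
    intro a ha
    by_cases h : a ∈ C
    · rw [hη'C a h]
      have := hη.1 a ha
      omega
    · rw [hη'n a h]
  have hst : G.Stable η' := by
    intro a ha
    have := hη.1 a ha
    by_cases h : a ∈ C
    · rw [hη'C a h]
      omega
    · rw [hη'n a h]
      exact this
  have hsub : ∀ a, a ≠ w → Graph.SubOne η' w a = η' a := fun a ha => by
    simp [Graph.SubOne, ha]
  have hsubw : Graph.SubOne η' w w = η w - 1 := by
    simp [Graph.SubOne, hη'n w hwC]
  have hrec'' : G.Recurrent (Graph.SubOne η' w) := by
    constructor
    · intro a ha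
      have h1 := hst a ha
      have h2 : Graph.SubOne η' w a ≤ η' a := by
        unfold Graph.SubOne
        split_ifs <;> omega
      omega
    · intro F hFV hFne
      have hsF : G.sink ∉ F := by
        intro h
        have := hFV h
        simp [Graph.VSet] at this
      have hFcomp : ∀ S' : Finset α, Disjoint F S' → F ⊆ Finset.univ \ S' := by
        intro S' h a ha
        simp only [Finset.mem_sdiff, Finset.mem_univ, true_and]
        exact Finset.disjoint_left.1 h ha
      by_cases hFB : ∃ x ∈ F, x ∈ B
      · obtain ⟨lB, hlB, hlBe⟩ := hB
        obtain ⟨x, hxF, hxB⟩ := hFB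
        rw [← hlBe, List.mem_toFinset] at hxB
        obtain ⟨z, hzF, hzl, S', -, hd, -, hb⟩ := Graph.aux_first G η F lB {G.sink} hlB
          (by simpa using hsF) ⟨x, hxF, hxB⟩
        have hzB : z ∈ B := by rw [← hlBe, List.mem_toFinset]; exact hzl
        refine ⟨z, hzF, ?_⟩
        rw [hsub z (fun h => hwB (h ▸ hzB))]
        exact ((Graph.aux_degIn_mono G (hFcomp S' hd) z).trans hb).trans (hle z (hFV hzF))
      by_cases hyF : y ∈ F
      · refine ⟨y, hyF, ?_⟩
        rw [hsub y hwy.symm, hη'n y hyC']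
        refine (Graph.aux_degIn_mono G (hFcomp _ ?_) y).trans hyburn
        rw [Finset.disjoint_left]
        intro a ha h
        rcases Finset.mem_insert.1 h with h | h
        · exact hsF (h ▸ ha)
        · exact hFB ⟨a, ha, h⟩
      by_cases hFC : ∃ x ∈ F, x ∈ C
      · obtain ⟨x, hxF, hxC, v, hvF, hxv⟩ := Graph.aux_hole G hG W C F hC y hyF hyC hFC
        refine ⟨x, hxF, ?_⟩
        rw [hsub x (fun h => hwC (h ▸ hxC)), hη'C x hxC]
        have : G.degIn F x < G.degIn Finset.univ x :=
          Graph.aux_degIn_lt G (Finset.subset_univ F) (Finset.mem_univ v) hvF hxv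
        have e : G.degIn Finset.univ x = G.deg x := rfl
        omega
      have hFS0 : Disjoint F S0 := by
        rw [Finset.disjoint_left]
        intro a ha h
        rcases (hmS0 a).1 h with h | h | h | h
        · exact hyF (h ▸ ha)
        · exact hsF (h ▸ ha)
        · exact hFB ⟨a, ha, h⟩
        · exact hFC ⟨a, ha, hD h⟩
      by_cases hFl : ∃ x ∈ F, x ∈ l2
      · obtain ⟨z, hzF, hzl, S', hS', hd, -, hb⟩ := Graph.aux_first G η F l2 S0 hl2 hFS0 hFl
        refine ⟨z, hzF, ?_⟩
        by_cases hzw : z = w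
        · subst hzw
          rw [hsubw]
          have huS' : u ∉ S' := by
            intro h
            rcases Finset.mem_union.1 (hS' h) with h | h
            · exact huF.1 h
            · exact huF.2 h
          have := Graph.aux_degIn_lt G (hFcomp S' hd) (x := z) (u := u)
            (by simpa using huS') (fun h => hFC ⟨u, h, huC⟩) hwu'
          have hb' : G.degIn (Finset.univ \ S') z ≤ η z := hb
          omega
        · rw [hsub z hzw]
          exact ((Graph.aux_degIn_mono G (hFcomp S' hd) z).trans hb).trans (hle z (hFV hzF))
      · obtain ⟨x, hxF, hx⟩ := hη.2 F hFV hFne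
        refine ⟨x, hxF, ?_⟩
        rw [hsub x (fun h => hFl ⟨x, hxF, h ▸ hwl⟩)]
        exact hx.trans (hle x (hFV hxF))
  have hrec' : G.Recurrent η' := by
    refine ⟨hst, fun F hF hne => ?_⟩
    obtain ⟨x, hxF, hx⟩ := hη.2 F hF hne
    exact ⟨x, hxF, hx.trans (hle x (hF hxF))⟩
  have hw1 : 1 ≤ η' w := by
    rw [hη'n w hwC]
    obtain ⟨z, hzF, hzl, S', hS', hd, -, hb⟩ := Graph.aux_first G η {w} l2 S0 hl2
      (by simpa using hwS0) ⟨w, by simp, hwl⟩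
    rw [Finset.mem_singleton] at hzF
    subst hzF
    have huS' : u ∉ S' := by
      intro h
      rcases Finset.mem_union.1 (hS' h) with h | h
      · exact huF.1 h
      · exact huF.2 h
    have := Graph.aux_degIn_lt G (Finset.empty_subset (Finset.univ \ S')) (x := z) (u := u)
      (by simpa using huS') (by simp) hwu'
    have hb' : G.degIn (Finset.univ \ S') z ≤ η z := hb
    omega
  refine hmin.2 η' hrec' ?_ w hwW ⟨hw1, hrec''⟩
  intro a ha
  rw [hη'n a (fun h => ((hC.2.2 a h a).1 h).1 ha)]
  exact hηW a ha
end

section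
/- Let G = (V ∪ {s}, E) be a finite sandpile graph, W ⊆ V, ξ generalized minimal on W, and η ∈ R_G with η_W = ξ. Let V_1, …, V_K be the connected components of the induced subgraph of G on (V ∪ {s}) \ W that do not contain s, and W' = W ∪ V_1 ∪ ⋯ ∪ V_K. Let B ⊆ V be a burnt set with V \ W' ⊆ B ⊆ V \ (V_1 ∪ ⋯ ∪ V_K) such that no vertex of B ∩ W is adjacent to any V_j. Then for each j, at most one vertex of W \ B adjacent to V_j is burnable for η given {s} ∪ B (i.e., with r_j denoting the number of vertices of W adjacent to V_j that become burnable at this stage, r_j ∈ {0,1}). -/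
open scoped Classical

open Sandpile

theorem burn_aux {α : Type*} [Fintype α] [DecidableEq α] (G : Sandpile.Graph α)
    (η : α → ℕ) (F : Finset α) (l : List α) :
    ∀ S : Finset α, G.IsBurnSeq η S l → (∀ x ∈ F, x ∉ S) → (∃ x ∈ F, x ∈ l) →
      ∃ x ∈ F, x ∈ l ∧ G.degIn F x ≤ η x := by
  induction l with
  | nil => rintro S - - ⟨x, -, hx⟩; simp at hx
  | cons a l ih =>
    rintro S ⟨_, hb, hs⟩ hF ⟨x, hxF, hxl⟩
    by_cases ha : a ∈ F
    · refine ⟨a, ha, by simp, le_trans ?_ hb⟩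
      unfold Sandpile.Graph.degIn
      apply Finset.sum_le_sum_of_subset
      intro y hy
      simp [hF y hy]
    · have hxa : x ≠ a := fun h => ha (h ▸ hxF)
      obtain ⟨y, hy, hyl, h⟩ := ih (insert a S) hs (by
        intro y hy
        have : y ≠ a := fun h => ha (h ▸ hy)
        simp [this, hF y hy]) ⟨x, hxF, by simpa [hxa] using hxl⟩
      exact ⟨y, hy, by simp [hyl], h⟩

/-- Lemma `one_entry`. In the burning of a recurrent extension of a
generalized minimal configuration, for each hole component `C` at most one vertex of
`W` adjacent to `C` is burnable at this stage. -/
theorem statement_11 {α : Type*} [Fintype α] [DecidableEq α] (G : Sandpile.Graph α)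
    (hG : G.IsSandpileGraph) (W : Finset α) (hWne : W.Nonempty) (hWs : G.sink ∉ W)
    (ξ : α → ℕ) (hstable : ∀ x ∈ W, ξ x < G.deg x) (hmin : G.Minimal W ξ)
    (η : α → ℕ) (hη : G.Recurrent η) (hηW : Graph.EqOn η ξ W)
    (B : Finset α) (hB : G.IsBurntSet η B) (hBV : B ⊆ G.VSet)
    (hB1 : ∀ x ∈ G.VSet, x ∉ W → (∀ C : Finset α, G.IsHoleComp W C → x ∉ C) → x ∈ B)
    (hB2 : ∀ C : Finset α, G.IsHoleComp W C → ∀ x ∈ B, x ∉ C)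
    (hB3 : ∀ C : Finset α, G.IsHoleComp W C → ∀ x ∈ B, x ∈ W → ∀ z ∈ C, G.b x z = 0)
    (C : Finset α) (hC : G.IsHoleComp W C) :
    ∀ y₁ y₂ : α,
      y₁ ∈ W → y₁ ∉ B → G.Burnable η (insert G.sink B) y₁ → (∃ z ∈ C, 0 < G.b y₁ z) →
      y₂ ∈ W → y₂ ∉ B → G.Burnable η (insert G.sink B) y₂ → (∃ z ∈ C, 0 < G.b y₂ z) →
      y₁ = y₂ := by
  have hC' := hC
  intro y₁ y₂ hy₁W hy₁B hb₁ hz₁ hy₂W hy₂B hb₂ hz₂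
  obtain ⟨z₁, hz₁C, hz₁⟩ := hz₁
  obtain ⟨z₂, hz₂C, hz₂⟩ := hz₂
  by_contra hne
  obtain ⟨hsym, -, -⟩ := hG
  obtain ⟨-, hsC, hcomp⟩ := hC
  have hCW : ∀ x ∈ C, x ∉ W := fun x hx => ((hcomp x hx x).1 hx).1
  have hCB : ∀ x ∈ C, x ∉ B := fun x hx hxB => hB2 C hC' x hxB hx
  have hCV : ∀ x ∈ C, x ∈ G.VSet := fun x hx => by
    simp only [Graph.VSet, Finset.mem_erase, Finset.mem_univ, and_true]
    exact fun h => hsC (h ▸ hx)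
  have hy₂C : y₂ ∉ C := fun h => hCW _ h hy₂W
  have hy₁C : y₁ ∉ C := fun h => hCW _ h hy₁W
  obtain ⟨η', hη'⟩ : ∃ η' : α → ℕ, η' = fun x => if x ∈ C then G.deg x - 1 else η x := ⟨_, rfl⟩
  have hin : ∀ x ∈ C, η' x = G.deg x - 1 := fun x hx => by simp [hη', hx]
  have hout : ∀ x, x ∉ C → η' x = η x := fun x hx => by simp [hη', hx]
  have hle : ∀ x, η x ≤ η' x := by
    intro x
    by_cases hx : x ∈ C
    · have := hη.1 x (hCV x hx)
      rw [hin x hx]; omega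
    · rw [hout x hx]
  have hst : G.Stable η' := by
    intro x hx
    have := hη.1 x hx
    by_cases hxC : x ∈ C
    · rw [hin x hxC]; omega
    · rw [hout x hxC]; exact this
  have hrec : G.Recurrent η' := by
    refine ⟨hst, fun F hF hne => ?_⟩
    obtain ⟨x, hx, h⟩ := hη.2 F hF hne
    exact ⟨x, hx, h.trans (hle x)⟩
  have heq : Graph.EqOn η' ξ W := by
    intro x hx
    rw [hout x (fun h => hCW x h hx), hηW x hx]
  -- enough particles at `y₂`
  have hkey : ∀ F : Finset α, F ⊆ G.VSet → (∀ x ∈ F, x ∉ B) → (∀ x ∈ F, x ∉ C) →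
      G.degIn F y₂ + 1 ≤ η y₂ := by
    intro F hF hFB hFC
    refine le_trans ?_ hb₂
    unfold Graph.degIn
    have hsub : insert z₂ F ⊆ Finset.univ \ insert G.sink B := by
      intro y hy
      have hyV : y ∈ G.VSet ∧ y ∉ B := by
        rcases Finset.mem_insert.1 hy with rfl | h
        · exact ⟨hCV _ hz₂C, hCB _ hz₂C⟩
        · exact ⟨hF h, hFB _ h⟩
      have : y ≠ G.sink := (Finset.mem_erase.1 hyV.1).1
      simp [this, hyV.2]
    refine le_trans ?_ (Finset.sum_le_sum_of_subset hsub)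
    rw [Finset.sum_insert (fun h => hFC _ h hz₂C)]
    omega
  refine hmin.2 η' hrec heq y₂ hy₂W ⟨?_, ?_, ?_⟩
  · have := hkey ∅ (by simp) (by simp) (by simp)
    rw [hout _ hy₂C]; omega
  · intro x hx
    refine lt_of_le_of_lt ?_ (hst x hx)
    unfold Graph.SubOne
    split_ifs <;> omega
  · intro F hF hFne
    have hζ : ∀ x, x ≠ y₂ → Graph.SubOne η' y₂ x = η' x := fun x hx => by
      simp [Graph.SubOne, hx]
    by_cases hFB : ∃ x ∈ F, x ∈ B
    · obtain ⟨l, hl, rfl⟩ := hB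
      obtain ⟨x, hxF, hxl, h⟩ := burn_aux G η F l {G.sink} hl (by
        intro x hx
        have := (Finset.mem_erase.1 (hF hx)).1
        simpa using this) (by simpa using hFB)
      have hx2 : x ≠ y₂ := by
        rintro rfl
        exact hy₂B (by simpa using hxl)
      exact ⟨x, hxF, by rw [hζ x hx2]; exact h.trans (hle x)⟩
    push Not at hFB
    by_cases hF1 : y₁ ∈ F
    · refine ⟨y₁, hF1, ?_⟩
      rw [hζ _ hne, hout _ hy₁C]
      refine le_trans ?_ hb₁
      unfold Graph.degIn
      apply Finset.sum_le_sum_of_subset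
      intro y hy
      have := (Finset.mem_erase.1 (hF hy)).1
      simp [this, hFB y hy]
    by_cases hFC : ∃ x ∈ F, x ∈ C
    · obtain ⟨x, hxF, hxC⟩ := hFC
      by_cases hnb : ∃ u ∈ F, u ∈ C ∧ ∃ v, v ∉ F ∧ 0 < G.b u v
      · obtain ⟨u, huF, huC, v, hvF, huv⟩ := hnb
        refine ⟨u, huF, ?_⟩
        rw [hζ u (fun h => hy₂C (h ▸ huC)), hin u huC]
        have h1 : ∑ y ∈ insert v F, G.b u y ≤ G.deg u :=
          Finset.sum_le_sum_of_subset (Finset.subset_univ _)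
        rw [Finset.sum_insert hvF] at h1
        unfold Graph.degIn
        omega
      · push Not at hnb
        exfalso
        have hreach : ∀ y, G.ReachIn {a : α | a ∉ W} x y → y ∈ F ∧ y ∈ C := by
          intro y hy
          induction hy with
          | refl => exact ⟨hxF, hxC⟩
          | tail hab hbc ih =>
            refine ⟨?_, (hcomp x hxC _).2 ⟨hbc.2.1, hab.tail hbc⟩⟩
            by_contra hc
            have := hnb _ ih.1 ih.2 _ hc
            have := hbc.2.2
            omega
        have hzF := (hreach z₁ ((hcomp x hxC z₁).1 hz₁C).2).1
        have := hnb z₁ hzF hz₁C y₁ hF1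
        rw [hsym] at this
        omega
    · push Not at hFC
      by_cases hF2 : y₂ ∈ F
      · refine ⟨y₂, hF2, ?_⟩
        have := hkey F hF hFB hFC
        simp only [Graph.SubOne, if_true]
        rw [hout _ hy₂C]; omega
      · obtain ⟨x, hx, h⟩ := hrec.2 F hF hFne
        exact ⟨x, hx, by rw [hζ x (fun e => hF2 (e ▸ hx))]; exact h⟩
end

section
/- Let G = (V ∪ {s}, E) be a finite sandpile graph and W ⊆ V with the induced subgraph of G on (V ∪ {s}) \ W connected. Then every configuration ξ ∈ R_{G_W} that is minimal in G_W has the same total number of particles, namely Σ_{w ∈ W} ξ(w) equals the number of edges of G_W minus the degree of s in G_W; equivalently, Σ_{w ∈ W} ξ(w) = (1/2) Σ_{x,y ∈ W} b_{xy}, the number of edges of G with both endpoints in W. -/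
open scoped Classical

open Sandpile

/-- Burning order produces a smaller ample configuration with the exact number of particles. -/
theorem exists_burn_config {α : Type*} [Fintype α] [DecidableEq α] (G : Sandpile.Graph α)
    (hs : ∀ x y, G.b x y = G.b y x) (hl : ∀ x, G.b x x = 0) (ξ : α → ℕ) :
    ∀ (n : ℕ) (W : Finset α), W.card = n →
      (∀ F ⊆ W, F.Nonempty → ∃ x ∈ F, G.degIn F x ≤ ξ x) →
      ∃ ζ : α → ℕ, (∀ x ∈ W, ζ x ≤ ξ x) ∧
        (∀ F ⊆ W, F.Nonempty → ∃ x ∈ F, G.degIn F x ≤ ζ x) ∧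
        2 * ∑ w ∈ W, ζ w = ∑ x ∈ W, ∑ y ∈ W, G.b x y := by
  intro n
  induction n with
  | zero =>
    intro W hW h
    obtain rfl := Finset.card_eq_zero.mp hW
    refine ⟨ξ, by simp, h, by simp⟩
  | succ n ih =>
    intro W hW h
    have hne : W.Nonempty := Finset.card_pos.mp (by omega)
    obtain ⟨x, hx, hxd⟩ := h W (Finset.Subset.refl _) hne
    obtain ⟨ζ, h1, h2, h3⟩ := ih (W.erase x) (by rw [Finset.card_erase_of_mem hx]; omega)
      (fun F hF => h F (hF.trans (Finset.erase_subset _ _)))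
    refine ⟨Function.update ζ x (G.degIn W x), ?_, ?_, ?_⟩
    · intro y hy
      by_cases hyx : y = x
      · subst hyx; simpa using hxd
      · rw [Function.update_of_ne hyx]
        exact h1 y (Finset.mem_erase.mpr ⟨hyx, hy⟩)
    · intro F hF hFne
      by_cases hxF : x ∈ F
      · refine ⟨x, hxF, ?_⟩
        rw [Function.update_self]
        exact Finset.sum_le_sum_of_subset hF
      · obtain ⟨y, hy, hyd⟩ := h2 F (fun z hz => Finset.mem_erase.mpr
          ⟨fun e => hxF (e ▸ hz), hF hz⟩) hFne
        refine ⟨y, hy, ?_⟩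
        rw [Function.update_of_ne (show y ≠ x from fun e => hxF (e ▸ hy))]
        exact hyd
    · have e1 : ∑ w ∈ W.erase x, Function.update ζ x (G.degIn W x) w
          = ∑ w ∈ W.erase x, ζ w :=
        Finset.sum_congr rfl fun y hy => Function.update_of_ne (Finset.ne_of_mem_erase hy) _ _
      have e2 : ∀ z, ∑ y ∈ W, G.b z y = G.b z x + ∑ y ∈ W.erase x, G.b z y :=
        fun z => (Finset.add_sum_erase W (fun y => G.b z y) hx).symm
      rw [← Finset.add_sum_erase W _ hx, ← Finset.add_sum_erase W (fun z => ∑ y ∈ W, G.b z y) hx,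
        e1, Function.update_self]
      have e3 : ∑ z ∈ W.erase x, ∑ y ∈ W, G.b z y
          = G.degIn W x + ∑ z ∈ W.erase x, ∑ y ∈ W.erase x, G.b z y := by
        rw [Finset.sum_congr rfl (fun z _ => e2 z), Finset.sum_add_distrib]
        congr 1
        unfold Sandpile.Graph.degIn
        rw [e2 x, hl x, zero_add]
        exact Finset.sum_congr rfl fun z _ => hs z x
      rw [e3]
      have e4 : ∑ y ∈ W, G.b x y = G.degIn W x := rfl
      simp only [e4]
      omega

/-- All minimal configurations on `W` have the same number of
particles: twice the total equals `∑_{x,y ∈ W} b_{xy}`, i.e. the total is the number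
of edges of `G_W` minus the degree of the sink in `G_W` (the number of edges of `G`
with both endpoints in `W`). -/
theorem statement_12 {α : Type*} [Fintype α] [DecidableEq α] (G : Sandpile.Graph α)
    (hG : G.IsSandpileGraph) (W : Finset α) (hWs : G.sink ∉ W)
    (hconn : G.ConnectedOn {x : α | x ∉ W}) :
    ∀ ξ : α → ℕ, G.WiredMinimal W ξ →
      2 * ∑ w ∈ W, ξ w = ∑ x ∈ W, ∑ y ∈ W, G.b x y := by
  intro ξ hξ
  obtain ⟨hs, hl, _⟩ := hG
  obtain ⟨⟨hst, ham⟩, hmin⟩ := hξ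
  obtain ⟨ζ, h1, h2, h3⟩ := exists_burn_config G hs hl ξ _ W rfl ham
  rw [← h3]
  congr 1
  refine Finset.sum_congr rfl fun w hw => ?_
  by_contra hne
  have hlt : ζ w < ξ w := lt_of_le_of_ne (h1 w hw) (Ne.symm hne)
  refine hmin w hw ⟨by omega, ?_, ?_⟩
  · intro x hx
    have := hst x hx
    unfold Sandpile.Graph.SubOne
    split_ifs <;> omega
  · intro F hF hFne
    obtain ⟨x, hx, hxd⟩ := h2 F hF hFne
    refine ⟨x, hx, hxd.trans ?_⟩
    have := h1 x (hF hx)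
    unfold Sandpile.Graph.SubOne
    split_ifs with hxw
    · subst hxw; omega
    · exact this
end

section
/- Let G = (V ∪ {s}, E) be a finite sandpile graph, W ⊆ V nonempty with the induced subgraph of G on (V ∪ {s}) \ W connected, and ξ a stable configuration on W (ξ(x) < deg_G(x) for x ∈ W). Define η* by η*(x) = ξ(x) for x ∈ W and η*(x) = deg_G(x) − 1 for x ∈ V \ W. Then the following are equivalent: (a) ξ is minimal on W; (b) η* ∈ R_G and for every w ∈ W, η* − δ_w ∉ R_G; (c) ξ ∈ R_{G_W} and for every w ∈ W, ξ − δ_w ∉ R_{G_W}. -/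
open scoped Classical

open Sandpile

namespace Sandpile.Graph

/-- The maximal extension of `ξ`. -/
def extMax {α : Type*} [Fintype α] [DecidableEq α] (G : Graph α) (W : Finset α) (ξ : α → ℕ) :
    α → ℕ := fun x => if x ∈ W then ξ x else G.deg x - 1

theorem exit_edge {α : Type*} (r : α → α → Prop) (F : Finset α) {x y : α}
    (h : Relation.ReflTransGen r x y) (hx : x ∈ F) (hy : y ∉ F) :
    ∃ u v, u ∈ F ∧ v ∉ F ∧ r u v := by
  induction h with
  | refl => exact absurd hx hy
  | @tail b c _ hbc ih =>
    by_cases hb : b ∈ F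
    · exact ⟨b, c, hb, hy, hbc⟩
    · exact ih hb

theorem degIn_lt {α : Type*} [Fintype α] [DecidableEq α] (G : Graph α) (F : Finset α)
    {u v : α} (hv : v ∉ F) (h : 0 < G.b u v) : G.degIn F u < G.deg u := by
  unfold degIn deg
  exact Finset.sum_lt_sum_of_subset (Finset.subset_univ F) (Finset.mem_univ v) hv h
    (fun _ _ _ => Nat.zero_le _)

theorem wired_of_recurrent {α : Type*} [Fintype α] [DecidableEq α] (G : Graph α)
    (W : Finset α) (hWs : G.sink ∉ W) {η ξ : α → ℕ} (h : G.Recurrent η) (he : EqOn η ξ W) :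
    G.WiredRecurrent W ξ := by
  have hW : W ⊆ G.VSet := fun x hx =>
    Finset.mem_erase.2 ⟨fun e => hWs (e ▸ hx), Finset.mem_univ x⟩
  refine ⟨fun x hx => he x hx ▸ h.1 x (hW hx), fun F hF hne => ?_⟩
  obtain ⟨x, hx, hd⟩ := h.2 F (hF.trans hW) hne
  exact ⟨x, hx, he x (hF hx) ▸ hd⟩

theorem recurrent_of_wired {α : Type*} [Fintype α] [DecidableEq α] (G : Graph α)
    (W : Finset α) (hWs : G.sink ∉ W) (hconn : G.ConnectedOn {x : α | x ∉ W}) {ξ : α → ℕ}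
    (h : G.WiredRecurrent W ξ) : G.Recurrent (G.extMax W ξ) := by
  have key : ∀ (F : Finset α) (x : α), G.sink ∉ F → x ∈ F → x ∉ W →
      ∃ u ∈ F, u ∉ W ∧ G.degIn F u < G.deg u := by
    intro F x hs hx hxW
    obtain ⟨u, v, hu, hv, huW, _, hb⟩ := exit_edge _ F (hconn x hxW _ hWs) hx hs
    exact ⟨u, hu, huW, G.degIn_lt F hv hb⟩
  refine ⟨fun x hx => ?_, fun F hF hne => ?_⟩
  · unfold extMax
    split_ifs with hxW
    · exact h.1 x hxW
    · obtain ⟨u, hu, _, hd⟩ := key {x} x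
        (fun e => (Finset.mem_erase.1 hx).1 (Finset.mem_singleton.1 e).symm)
        (Finset.mem_singleton_self x) hxW
      rw [Finset.mem_singleton.1 hu] at hd
      omega
  · by_cases hFW : F ⊆ W
    · obtain ⟨x, hx, hd⟩ := h.2 F hFW hne
      exact ⟨x, hx, by simpa [extMax, hFW hx] using hd⟩
    · obtain ⟨x, hx, hxW⟩ := Finset.not_subset.1 hFW
      obtain ⟨u, hu, huW, hd⟩ := key F x
        (fun e => (Finset.mem_erase.1 (hF e)).1 rfl) hx hxW
      refine ⟨u, hu, ?_⟩
      simp only [extMax, huW, if_false]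
      omega

theorem eqOn_extMax {α : Type*} [Fintype α] [DecidableEq α] (G : Graph α)
    (W : Finset α) (ξ : α → ℕ) : EqOn (G.extMax W ξ) ξ W := by
  intro x hx
  simp [extMax, hx]

theorem subOne_extMax {α : Type*} [Fintype α] [DecidableEq α] (G : Graph α)
    (W : Finset α) (ξ : α → ℕ) {w : α} (hw : w ∈ W) :
    SubOne (G.extMax W ξ) w = G.extMax W (SubOne ξ w) := by
  funext x
  by_cases hx : x = w
  · subst hx
    simp [SubOne, extMax, hw]
  · simp [SubOne, extMax, hx]

end Sandpile.Graph

/-- Equivalent characterizations of minimality: via all recurrent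
extensions, via the maximal extension `η*`, and via the wired graph `G_W`. -/
theorem statement_13 {α : Type*} [Fintype α] [DecidableEq α] (G : Sandpile.Graph α)
    (hG : G.IsSandpileGraph) (W : Finset α) (hWne : W.Nonempty) (hWs : G.sink ∉ W)
    (hconn : G.ConnectedOn {x : α | x ∉ W}) (ξ : α → ℕ)
    (hstable : ∀ x ∈ W, ξ x < G.deg x) :
    (G.Minimal W ξ ↔
      (G.Recurrent (fun x => if x ∈ W then ξ x else G.deg x - 1) ∧
        ∀ w ∈ W,
          ¬(1 ≤ (fun x => if x ∈ W then ξ x else G.deg x - 1 : α → ℕ) w ∧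
            G.Recurrent
              (Graph.SubOne (fun x => if x ∈ W then ξ x else G.deg x - 1) w)))) ∧
    (G.Minimal W ξ ↔ G.WiredMinimal W ξ) := by
  have hiff : ∀ ζ : α → ℕ, G.Recurrent (G.extMax W ζ) ↔ G.WiredRecurrent W ζ := fun ζ =>
    ⟨fun h => G.wired_of_recurrent W hWs h (G.eqOn_extMax W ζ),
      fun h => G.recurrent_of_wired W hWs hconn h⟩
  have hac : G.Minimal W ξ ↔ G.WiredMinimal W ξ := by
    constructor
    · rintro ⟨⟨η, hη, he⟩, hmin⟩
      have hw := G.wired_of_recurrent W hWs hη he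
      refine ⟨hw, fun w hwW hc => ?_⟩
      refine hmin _ ((hiff ξ).2 hw) (G.eqOn_extMax W ξ) w hwW ⟨?_, ?_⟩
      · rw [G.eqOn_extMax W ξ w hwW]
        exact hc.1
      · rw [G.subOne_extMax W ξ hwW]
        exact (hiff _).2 hc.2
    · rintro ⟨hr, hmin⟩
      refine ⟨⟨_, (hiff ξ).2 hr, G.eqOn_extMax W ξ⟩, fun η _ he w hw hc => ?_⟩
      refine hmin w hw ⟨he w hw ▸ hc.1, G.wired_of_recurrent W hWs hc.2 ?_⟩
      intro x hx
      simp only [Graph.SubOne, he x hx]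
  refine ⟨?_, hac⟩
  rw [hac]
  change _ ↔ (G.Recurrent (G.extMax W ξ) ∧ ∀ w ∈ W,
    ¬(1 ≤ G.extMax W ξ w ∧ G.Recurrent (Graph.SubOne (G.extMax W ξ) w)))
  refine and_congr (hiff ξ).symm (forall₂_congr fun w hw => ?_)
  rw [G.subOne_extMax W ξ hw, hiff, G.eqOn_extMax W ξ w hw]
end

section
/- Let G = (V ∪ {s}, E) be a finite sandpile graph, Q ⊆ V, and η a stable sandpile on G. Then the two-phase burning based on Q eventually burns every vertex (i.e., U^{(2)}_i = ∅ for all sufficiently large i) if and only if η ∈ R_G, i.e., η is ample for every nonempty F ⊆ V. -/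
open scoped Classical

open Sandpile

/-- The two-phase burning based on `Q` eventually burns every vertex
if and only if the stable sandpile `η` is recurrent (ample for every nonempty
`F ⊆ V`). -/
theorem statement_15 {α : Type*} [Fintype α] [DecidableEq α] (G : Sandpile.Graph α)
    (hG : G.IsSandpileGraph) (Q : Finset α) (hQ : Q ⊆ G.VSet)
    (η : α → ℕ) (hη : G.Stable η) :
    (∃ N : ℕ, ∀ i ≥ N, G.U2 η Q i = ∅) ↔
      (∀ F ⊆ G.VSet, F.Nonempty → G.AmpleFor η F) := by
  constructor
  · rintro ⟨N, hN⟩ F hF hne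
    by_contra hamp
    have hlt : ∀ U : Finset α, F ⊆ U → ∀ x ∈ F, η x < G.degIn U x := by
      intro U hU x hx
      have h1 : η x < G.degIn F x := by
        by_contra h
        exact hamp ⟨x, hx, not_lt.mp h⟩
      exact lt_of_lt_of_le h1 (Finset.sum_le_sum_of_subset hU)
    have h1 : ∀ i, F ⊆ G.U1 η Q i := by
      intro i
      induction i with
      | zero => exact hF
      | succ i ih =>
        intro x hx
        rw [Sandpile.Graph.U1]
        exact Finset.mem_filter.mpr ⟨ih hx, Or.inr (hlt _ ih x hx)⟩
    have h2 : ∀ i, F ⊆ G.U2 η Q i := by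
      intro i
      induction i with
      | zero => exact h1 _
      | succ i ih =>
        intro x hx
        rw [Sandpile.Graph.U2]
        exact Finset.mem_filter.mpr ⟨ih hx, hlt _ ih x hx⟩
    obtain ⟨x, hx⟩ := hne
    have := h2 N hx
    rw [hN N le_rfl] at this
    exact absurd this (Finset.notMem_empty x)
  · intro hamp
    have h1 : ∀ i, G.U1 η Q i ⊆ G.VSet := by
      intro i
      induction i with
      | zero => exact Finset.Subset.refl _
      | succ i ih =>
        rw [Sandpile.Graph.U1]
        exact (Finset.filter_subset _ _).trans ih
    have h2 : ∀ i, G.U2 η Q i ⊆ G.VSet := by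
      intro i
      induction i with
      | zero => exact h1 _
      | succ i ih =>
        rw [Sandpile.Graph.U2]
        exact (Finset.filter_subset _ _).trans ih
    have hcard : ∀ i, (G.U2 η Q i).card ≤ (G.U2 η Q 0).card - i := by
      intro i
      induction i with
      | zero => exact le_rfl
      | succ i ih =>
        rcases (G.U2 η Q i).eq_empty_or_nonempty with he | hne
        · have : G.U2 η Q (i + 1) = ∅ := by
            rw [Sandpile.Graph.U2, he]
            rfl
          rw [this]
          exact Nat.zero_le _
        · obtain ⟨x, hx, hle⟩ := hamp _ (h2 i) hne
          have hss : G.U2 η Q (i + 1) ⊂ G.U2 η Q i := by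
            rw [Sandpile.Graph.U2]
            exact Finset.filter_ssubset.mpr ⟨x, hx, not_lt.mpr hle⟩
          have := Finset.card_lt_card hss
          omega
    refine ⟨(G.U2 η Q 0).card, fun i hi => ?_⟩
    have := hcard i
    exact Finset.card_eq_zero.mp (by omega)
end

section
/- Let G = (V ∪ {s}, E) be a finite sandpile graph, Q ⊆ V, and fix for each x ∈ V a strict total order <_x on the set of edges of G incident to x. Then the map η ↦ t(η) defined by the burning bijection based on Q is a bijection from R_G onto the set of spanning trees of G; moreover each edge e_x of t(η) joins x to a vertex burnt strictly before x. -/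
open scoped Classical

open Sandpile


namespace SPaux

open Sandpile.Graph

variable {α : Type*} [Fintype α] [DecidableEq α] (G : Sandpile.Graph α)

/-! ### Parent systems and spanning trees -/

/-- Parent system with rank. -/
def PS (p : α → α) (k : α → ℕ) (r : α → ℕ) : Prop :=
  ∀ x, x ≠ G.sink → k x < G.b x (p x) ∧ r (p x) < r x

/-- Tree of a parent system. -/
def PT (p : α → α) (k : α → ℕ) : Set (Sym2 α × ℕ) :=
  {q | ∃ x, x ≠ G.sink ∧ q = (s(x, p x), k x)}

lemma edgeRelSet_symm (t : Set (Sym2 α × ℕ)) {u v : α} (h : edgeRelSet t u v) :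
    edgeRelSet t v u := by
  obtain ⟨k, hk⟩ := h
  exact ⟨k, by rwa [Sym2.eq_swap]⟩

lemma PT_conn {p : α → α} {k r : α → ℕ} (h : PS G p k r) (u v : α) :
    Relation.ReflTransGen (edgeRelSet (PT G p k)) u v := by
  have key : ∀ n x, r x = n → Relation.ReflTransGen (edgeRelSet (PT G p k)) x G.sink := by
    intro n
    induction n using Nat.strong_induction_on with
    | _ n ih =>
      intro x hx
      by_cases hs : x = G.sink
      · subst hs; exact Relation.ReflTransGen.refl
      · have h1 := (h x hs).2
        refine Relation.ReflTransGen.head ?_ (ih (r (p x)) (by omega) (p x) rfl)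
        exact ⟨k x, x, hs, rfl⟩
  have hsym : ∀ {a b}, Relation.ReflTransGen (edgeRelSet (PT G p k)) a b →
      Relation.ReflTransGen (edgeRelSet (PT G p k)) b a := by
    intro a b hab
    induction hab with
    | refl => exact Relation.ReflTransGen.refl
    | tail _ h2 ih => exact Relation.ReflTransGen.head (edgeRelSet_symm _ h2) ih
  exact (key _ u rfl).trans (hsym (key _ v rfl))

lemma PT_isTree {p : α → α} {k r : α → ℕ} (h : PS G p k r) :
    G.IsSpanningTreeSet (PT G p k) := by
  refine ⟨?_, PT_conn G h, ?_⟩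
  · rintro q ⟨x, hx, rfl⟩
    exact ⟨x, p x, rfl, (h x hx).1⟩
  · rintro q ⟨x, hx, rfl⟩ a b hab hr
    -- descendants
    let par : α → α → Prop := fun u v => u ≠ G.sink ∧ v = p u
    let S : Set α := {z | Relation.ReflTransGen par z x}
    have hrank : ∀ z, z ∈ S → r x ≤ r z := by
      intro z hz
      induction hz using Relation.ReflTransGen.head_induction_on with
      | refl => exact le_rfl
      | head hac _ ih =>
        obtain ⟨h1, h2⟩ := hac
        have := (h _ h1).2
        subst h2
        omega
    have hx' : x ∈ S := Relation.ReflTransGen.refl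
    have hpx : p x ∉ S := fun hp => by
      have := hrank _ hp
      have := (h x hx).2
      omega
    have hstep : ∀ y, y ≠ G.sink → y ≠ x → (y ∈ S ↔ p y ∈ S) := by
      intro y hy hyx
      constructor
      · intro hyS
        rcases Relation.ReflTransGen.cases_head hyS with h1 | ⟨c, hc, hc2⟩
        · exact absurd h1 hyx
        · obtain ⟨_, rfl⟩ := hc
          exact hc2
      · intro hp
        exact Relation.ReflTransGen.head ⟨hy, rfl⟩ hp
    have hclosed : ∀ u v, edgeRelSet (PT G p k \ {(s(x, p x), k x)}) u v → (u ∈ S ↔ v ∈ S) := by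
      rintro u v ⟨m, ⟨y, hy, hye⟩, hne⟩
      have hyx : y ≠ x := by
        rintro rfl
        exact hne hye
      have h1 := hstep y hy hyx
      have h2 := (Prod.mk.inj hye).1
      rcases Sym2.eq_iff.1 h2 with ⟨rfl, rfl⟩ | ⟨rfl, rfl⟩
      · exact h1
      · exact h1.symm
    have hall : ∀ u v, Relation.ReflTransGen
        (edgeRelSet (PT G p k \ {(s(x, p x), k x)})) u v → (u ∈ S ↔ v ∈ S) := by
      intro u v huv
      induction huv with
      | refl => exact Iff.rfl
      | tail _ h2 ih => exact ih.trans (hclosed _ _ h2)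
    have hab' := hall a b hr
    rcases Sym2.eq_iff.1 hab with ⟨rfl, rfl⟩ | ⟨rfl, rfl⟩
    · exact hpx (hab'.1 hx')
    · exact hpx (hab'.2 hx')

lemma tree_PS (hG : G.IsSandpileGraph) {t : Set (Sym2 α × ℕ)} (ht : G.IsSpanningTreeSet t) :
    ∃ p k r, PS G p k r ∧ PT G p k = t := by
  obtain ⟨h1, h2, h3⟩ := ht
  let R : ℕ → Set α := fun n => Nat.rec {G.sink} (fun _ S => {y | ∃ x ∈ S, edgeRelSet t x y}) n
  have hR : ∀ x, ∃ n, x ∈ R n := by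
    intro x
    induction h2 G.sink x with
    | refl => exact ⟨0, rfl⟩
    | tail _ hbc ih =>
      obtain ⟨n, hn⟩ := ih
      exact ⟨n + 1, _, hn, hbc⟩
  let r : α → ℕ := fun x => sInf {n | x ∈ R n}
  have hpar : ∀ x, ∃ y m, x ≠ G.sink → (s(x, y), m) ∈ t ∧ r y < r x := by
    intro x
    by_cases hx : x = G.sink
    · exact ⟨x, 0, fun h => absurd hx h⟩
    · have hs : r x ∈ {n | x ∈ R n} := Nat.sInf_mem (hR x)
      rcases hn : r x with _ | n
      · rw [hn] at hs
        exact absurd hs hx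
      · rw [hn] at hs
        obtain ⟨y, hy, m, hm⟩ := hs
        refine ⟨y, m, fun _ => ⟨by rwa [Sym2.eq_swap], ?_⟩⟩
        have : r y ≤ n := Nat.sInf_le hy
        omega
  choose p k hpk using hpar
  have hPS : PS G p k r := by
    intro x hx
    obtain ⟨ha, hb⟩ := hpk x hx
    refine ⟨?_, hb⟩
    obtain ⟨u, v, huv, hk⟩ := h1 _ ha
    rcases Sym2.eq_iff.1 huv with ⟨h5, h6⟩ | ⟨h5, h6⟩
    · rw [← h5, ← h6] at hk; exact hk
    · rw [← h5, ← h6, hG.1] at hk; exact hk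
  refine ⟨p, k, r, hPS, ?_⟩
  apply Set.Subset.antisymm
  · rintro q ⟨x, hx, rfl⟩
    exact (hpk x hx).1
  · intro q hq
    by_contra hqn
    obtain ⟨u, v, huv, hlt⟩ := h1 q hq
    refine h3 q hq u v huv ?_
    have hmono := PT_conn G hPS u v
    clear huv hlt
    induction hmono with
    | refl => exact Relation.ReflTransGen.refl
    | tail _ hab ih =>
    refine ih.tail ?_
    obtain ⟨m, hm⟩ := hab
    refine ⟨m, ?_, ?_⟩
    · obtain ⟨x, hx, hxe⟩ := hm
      rw [hxe]
      exact (hpk x hx).1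
    · rintro hh
      rw [Set.mem_singleton_iff] at hh
      rw [hh] at hm
      exact hqn hm

lemma PS_unique {p k r p' k'} (h : PS G p k r)
    (heq : PT G p k = PT G p' k') : ∀ x, x ≠ G.sink → p x = p' x ∧ k x = k' x := by
  have key : ∀ n x, r x = n → x ≠ G.sink → p x = p' x ∧ k x = k' x := by
    intro n
    induction n using Nat.strong_induction_on with
    | _ n ih =>
      intro x hxn hx
      have hm : (s(x, p x), k x) ∈ PT G p' k' := by
        rw [← heq]; exact ⟨x, hx, rfl⟩
      obtain ⟨y, hy, hye⟩ := hm
      obtain ⟨hs, hk⟩ := Prod.mk.inj hye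
      rcases Sym2.eq_iff.1 hs with ⟨h5, h6⟩ | ⟨h5, h6⟩
      · subst h5; exact ⟨h6, hk⟩
      · have hlt := (h x hx).2
        have := ih (r y) (by rw [← h6]; omega) y rfl hy
        have hlt2 := (h y hy).2
        rw [this.1, ← h5, ← h6] at hlt2
        omega
  intro x hx
  exact key _ x rfl hx

/-! ### Levels -/

/-- compatibility of levels with parents. -/
def Compat (Q U : Finset α) (τ : α → ℕ) (p : α → α) : Prop :=
  G.sink ∉ U ∧ τ G.sink = 0 ∧ ∀ x, x ≠ G.sink →
    (x ∈ U ↔ x ∈ Q ∨ p x ∈ U) ∧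
    (x ∉ U → τ x = τ (p x) + 1) ∧
    (x ∈ U → p x ∈ U → τ x = τ (p x) + 1) ∧
    (x ∈ U → p x ∉ U → τ x = 1)

lemma Compat_exists (Q : Finset α) {p k r} (h : PS G p k r) :
    ∃ U τ, Compat G Q U τ p := by
  have hex : ∃ f : α → Prop × ℕ, ∀ x, f x = if x = G.sink then (False, 0) else
      ((x ∈ Q ∨ (f (p x)).1),
        if (x ∈ Q ∨ (f (p x)).1) ∧ ¬ (f (p x)).1 then 1 else (f (p x)).2 + 1) := by
    have hwf : WellFounded (fun a b : α => r a < r b) := (measure r).wf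
    let F : ∀ x, (∀ y, r y < r x → Prop × ℕ) → Prop × ℕ := fun x ih =>
      if hx : x = G.sink then (False, 0) else
      ((x ∈ Q ∨ (ih (p x) (h x hx).2).1),
        if (x ∈ Q ∨ (ih (p x) (h x hx).2).1) ∧ ¬ (ih (p x) (h x hx).2).1 then 1
        else (ih (p x) (h x hx).2).2 + 1)
    refine ⟨hwf.fix F, fun x => ?_⟩
    rw [hwf.fix_eq]
    by_cases hx : x = G.sink
    · simp [F, hx]
    · simp only [F, hx, dif_neg, not_false_eq_true, if_false]
  obtain ⟨f, hf⟩ := hex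
  refine ⟨Finset.univ.filter (fun x => (f x).1), fun x => (f x).2, ?_, ?_, ?_⟩
  · simp [hf G.sink]
  · simp [hf G.sink]
  · intro x hx
    have := hf x
    rw [if_neg hx] at this
    have h1 : (f x).1 = (x ∈ Q ∨ (f (p x)).1) := by rw [this]
    have h2 : (f x).2 = if (x ∈ Q ∨ (f (p x)).1) ∧ ¬ (f (p x)).1 then 1
      else (f (p x)).2 + 1 := by rw [this]
    simp only [Finset.mem_filter, Finset.mem_univ, true_and]
    refine ⟨by rw [h1], ?_, ?_, ?_⟩
    · intro h3
      rw [h1] at h3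
      rw [h2, if_neg (fun h => h3 h.1)]
    · intro _ h4
      rw [h2, if_neg (fun h => h.2 h4)]
    · intro h3 h4
      rw [h1] at h3
      rw [h2, if_pos ⟨h3, h4⟩]

lemma Compat_unique (Q : Finset α) {p k r p' U τ U' τ'} (h : PS G p k r)
    (hp : ∀ x, x ≠ G.sink → p x = p' x)
    (h1 : Compat G Q U τ p) (h2 : Compat G Q U' τ' p') : U = U' ∧ τ = τ' := by
  have key : ∀ n x, r x = n → ((x ∈ U ↔ x ∈ U') ∧ τ x = τ' x) := by
    intro n
    induction n using Nat.strong_induction_on with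
    | _ n ih =>
      intro x hxn
      by_cases hx : x = G.sink
      · subst hx
        exact ⟨iff_of_false h1.1 h2.1, h1.2.1.trans h2.2.1.symm⟩
      · obtain ⟨a1, a2, a3, a4⟩ := h1.2.2 x hx
        obtain ⟨b1, b2, b3, b4⟩ := h2.2.2 x hx
        rw [← hp x hx] at b1 b2 b3 b4
        obtain ⟨i1, i2⟩ := ih (r (p x)) (by have := (h x hx).2; omega) (p x) rfl
        have e1 : x ∈ U ↔ x ∈ U' := by rw [a1, b1, i1]
        refine ⟨e1, ?_⟩
        by_cases c1 : x ∈ U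
        · by_cases c2 : p x ∈ U
          · rw [a3 c1 c2, b3 (e1.1 c1) (i1.1 c2), i2]
          · rw [a4 c1 c2, b4 (e1.1 c1) (fun h => c2 (i1.2 h))]
        · rw [a2 c1, b2 (fun h => c1 (e1.2 h)), i2]
  exact ⟨Finset.ext fun x => (key _ x rfl).1, funext fun x => (key _ x rfl).2⟩

/-- Unburnt set just before `x` burns. -/
def unb (U : Finset α) (τ : α → ℕ) (x : α) : Finset α :=
  Finset.univ.filter fun y => y ≠ G.sink ∧
    if x ∈ U then y ∈ U ∧ τ x - 1 < τ y else (y ∈ U ∨ τ x - 1 < τ y)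

/-- previous layer -/
def prv (U : Finset α) (τ : α → ℕ) (x : α) : Finset α :=
  Finset.univ.filter fun y =>
    if x ∈ U then (if τ x = 1 then y ∉ U else y ∈ U ∧ τ y = τ x - 1)
    else (y ∉ U ∧ τ y = τ x - 1)

/-- `(U, τ)` describes the burning of `η`. -/
def Lev (η : α → ℕ) (Q U : Finset α) (τ : α → ℕ) : Prop :=
  G.sink ∉ U ∧ τ G.sink = 0 ∧ G.U1lim η Q = U ∧
  (∀ i x, x ∈ G.U1 η Q i ↔ x ≠ G.sink ∧ (x ∈ U ∨ i < τ x)) ∧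
  (∀ i x, x ∈ G.U2 η Q i ↔ x ∈ U ∧ i < τ x)

variable {G}

lemma Lev.pos {η Q U τ} (h : Lev G η Q U τ) {x : α} (hx : x ≠ G.sink) : 0 < τ x := by
  obtain ⟨h1, h2, h3, h4, h5⟩ := h
  by_cases hU : x ∈ U
  · have : x ∈ G.U2 η Q 0 := by show x ∈ G.U1lim η Q; rw [h3]; exact hU
    exact ((h5 0 x).1 this).2
  · have : x ∈ G.U1 η Q 0 := by simp [Graph.U1, Graph.VSet, hx]
    exact (((h4 0 x).1 this).2).resolve_left hU

lemma Lev.p1 {η Q U τ} (h : Lev G η Q U τ) {x : α} (hx : x ∉ U) : G.p1time η Q x = τ x := by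
  obtain ⟨h1, h2, h3, h4, h5⟩ := h
  have : {i : ℕ | x ∉ G.U1 η Q i} = Set.Ici (τ x) := by
    ext i
    simp only [Set.mem_ofPred_eq, h4, Set.mem_Ici]
    by_cases hs : x = G.sink
    · subst hs; simp [h2]
    · simp [hs, hx]
  rw [Graph.p1time, this, csInf_Ici]

lemma Lev.p2 {η Q U τ} (h : Lev G η Q U τ) {x : α} (hx : x ∈ U) : G.p2time η Q x = τ x := by
  obtain ⟨h1, h2, h3, h4, h5⟩ := h
  have : {i : ℕ | x ∉ G.U2 η Q i} = Set.Ici (τ x) := by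
    ext i
    simp [h5, hx]
  rw [Graph.p2time, this, csInf_Ici]

lemma Lev.before {η Q U τ} (h : Lev G η Q U τ) (x : α) :
    G.burntBefore η Q x = Finset.univ \ unb G U τ x := by
  have h0 := h
  obtain ⟨h1, h2, h3, h4, h5⟩ := h
  unfold Graph.burntBefore
  by_cases hx : x ∈ U
  · rw [h3, if_pos hx, h0.p2 hx]
    congr 1
    ext y
    simp only [h5, unb, hx, if_true, Finset.mem_filter, Finset.mem_univ, true_and]
    constructor
    · rintro ⟨a, b⟩
      exact ⟨fun h => h1 (h ▸ a), a, b⟩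
    · exact fun h => h.2
  · rw [h3, if_neg hx, h0.p1 hx]
    congr 1
    ext y
    simp only [h4, unb, hx, if_false, Finset.mem_filter, Finset.mem_univ, true_and]

lemma Lev.prev {η Q U τ} (h : Lev G η Q U τ) {x : α} (hs : x ≠ G.sink) :
    G.prevBurnt η Q x = prv U τ x := by
  have h0 := h
  have hpos := h0.pos hs
  obtain ⟨h1, h2, h3, h4, h5⟩ := h
  unfold Graph.prevBurnt
  by_cases hx : x ∈ U
  · rw [h3, if_pos hx, h0.p2 hx]
    rcases hn : τ x - 1 with _ | n
    · have : τ x = 1 := by omega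
      ext y
      simp [Graph.B2, h3, prv, hx, this]
    · have : τ x ≠ 1 := by omega
      ext y
      simp only [Graph.B2, Finset.mem_sdiff, h5, prv, hx, if_true, this, if_false,
        Finset.mem_filter, Finset.mem_univ, true_and, hn]
      constructor
      · rintro ⟨⟨a, b⟩, c⟩
        refine ⟨a, ?_⟩
        have : ¬ (n + 1 < τ y) := fun h => c ⟨a, h⟩
        omega
      · rintro ⟨a, b⟩
        refine ⟨⟨a, by omega⟩, fun h => by omega⟩
  · rw [h3, if_neg hx, h0.p1 hx]
    rcases hn : τ x - 1 with _ | n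
    · ext y
      simp only [Graph.B1, Finset.mem_singleton, prv, hx, if_false,
        Finset.mem_filter, Finset.mem_univ, true_and, hn]
      constructor
      · rintro rfl; exact ⟨h1, h2⟩
      · rintro ⟨_, b⟩
        by_contra hy
        have := h0.pos hy
        omega
    · ext y
      simp only [Graph.B1, Finset.mem_sdiff, h4, prv, hx, if_false,
        Finset.mem_filter, Finset.mem_univ, true_and, hn]
      constructor
      · rintro ⟨⟨a, b⟩, c⟩
        have hyU : y ∉ U := fun h => c ⟨a, Or.inl h⟩
        have : ¬ (n + 1 < τ y) := fun h => c ⟨a, Or.inr h⟩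
        have := b.resolve_left hyU
        exact ⟨hyU, by omega⟩
      · rintro ⟨a, b⟩
        have hy : y ≠ G.sink := by
          rintro rfl
          omega
        refine ⟨⟨hy, Or.inr (by omega)⟩, ?_⟩
        rintro ⟨_, h | h⟩
        · exact a h
        · omega

lemma degIn_compl (S : Finset α) (x : α) :
    G.degIn (Finset.univ \ S) x + G.degIn S x = G.deg x := by
  unfold Graph.degIn Graph.deg
  exact Finset.sum_sdiff (Finset.subset_univ S)

lemma degIn_mono {S T : Finset α} (h : S ⊆ T) (x : α) : G.degIn S x ≤ G.degIn T x :=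
  Finset.sum_le_sum_of_subset h

lemma degIn_union {S T : Finset α} (h : Disjoint S T) (x : α) :
    G.degIn (S ∪ T) x = G.degIn S x + G.degIn T x :=
  Finset.sum_union h

/-- the bounds on `η`. -/
def Bounds (G : Sandpile.Graph α) (η : α → ℕ) (U : Finset α) (τ : α → ℕ) : Prop :=
  ∀ x, x ≠ G.sink → G.degIn (unb G U τ x) x ≤ η x ∧
    η x < G.degIn (unb G U τ x) x + G.degIn (prv U τ x) x

/-- Layers. -/
lemma disj_unb_prv {U : Finset α} {τ : α → ℕ} (hsU : G.sink ∉ U) (hτ : τ G.sink = 0)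
    {x : α} (hx : 0 < τ x) : Disjoint (unb G U τ x) (prv U τ x) := by
  rw [Finset.disjoint_left]
  intro y hy hy2
  simp only [unb, prv, Finset.mem_filter, Finset.mem_univ, true_and] at hy hy2
  split_ifs at hy hy2
  · exact hy2 hy.2.1
  · omega
  · rcases hy.2 with h | h
    · exact hy2.1 h
    · omega

lemma Lev.bounds {η Q U τ} (h : Lev G η Q U τ) (hst : G.Stable η) : Bounds G η U τ := by
  intro x hs
  have hpos := h.pos hs
  have hdis := disj_unb_prv h.1 h.2.1 hpos
  have hη : η x < G.deg x := hst x (by simp [Graph.VSet, hs])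
  rw [← degIn_union hdis]
  have h0 := h
  obtain ⟨h1, h2, h3, h4, h5⟩ := h
  by_cases hx : x ∈ U
  · have e1 : ∀ i, τ x = i + 1 → unb G U τ x = G.U2 η Q i := by
      intro i hi
      ext y
      simp only [h5, unb, hx, if_true, Finset.mem_filter, Finset.mem_univ, true_and, hi,
        Nat.add_sub_cancel]
      constructor
      · exact fun h => h.2
      · rintro ⟨a, b⟩
        exact ⟨fun h => h1 (h ▸ a), a, b⟩
    obtain ⟨i, hi⟩ : ∃ i, τ x = i + 1 := ⟨τ x - 1, by omega⟩
    have m1 : x ∈ G.U2 η Q i := (h5 i x).2 ⟨hx, by omega⟩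
    have m2 : x ∉ G.U2 η Q (i + 1) := fun h => by have := ((h5 _ x).1 h).2; omega
    constructor
    · rw [e1 i hi]
      by_contra hc
      exact m2 (by simp only [Graph.U2, Finset.mem_filter]; exact ⟨m1, by omega⟩)
    · rcases i with _ | i
      · refine lt_of_lt_of_le hη ?_
        have : unb G U τ x ∪ prv U τ x = Finset.univ := by
          rw [e1 0 hi]
          ext y
          simp only [Finset.mem_union, h5, prv, hx, hi, if_true, Finset.mem_filter,
            Finset.mem_univ, true_and, iff_true, zero_add]
          by_cases hy : y ∈ U
          · exact Or.inl ⟨hy, h0.pos (fun h => h1 (h ▸ hy))⟩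
          · exact Or.inr hy
        rw [this]
        exact le_rfl
      · have : η x < G.degIn (G.U2 η Q i) x := by
          have := m1
          simp only [Graph.U2, Finset.mem_filter] at this
          exact this.2
        refine lt_of_lt_of_le this (degIn_mono ?_ x)
        rw [e1 _ hi]
        intro y hy
        rw [h5] at hy
        simp only [Finset.mem_union, h5, prv, hx, hi, if_true, Finset.mem_filter,
            Finset.mem_univ, true_and]
        rw [if_neg (by omega)]
        by_cases hc : i + 1 < τ y
        · exact Or.inl ⟨hy.1, hc⟩
        · exact Or.inr ⟨hy.1, by omega⟩
  · have e1 : ∀ i, τ x = i + 1 → unb G U τ x = G.U1 η Q i := by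
      intro i hi
      ext y
      simp only [h4, unb, hx, if_false, Finset.mem_filter, Finset.mem_univ, true_and, hi,
        Nat.add_sub_cancel]
    obtain ⟨i, hi⟩ : ∃ i, τ x = i + 1 := ⟨τ x - 1, by omega⟩
    have m1 : x ∈ G.U1 η Q i := (h4 i x).2 ⟨hs, Or.inr (by omega)⟩
    have m2 : x ∉ G.U1 η Q (i + 1) := fun h => by
      rcases ((h4 _ x).1 h).2 with h | h
      · exact hx h
      · omega
    have m3 : ¬ (x ∈ Q ∨ η x < G.degIn (G.U1 η Q i) x) := fun hc =>
      m2 (by simp only [Graph.U1, Finset.mem_filter]; exact ⟨m1, hc⟩)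
    push Not at m3
    constructor
    · rw [e1 i hi]
      exact m3.2
    · rcases i with _ | i
      · refine lt_of_lt_of_le hη ?_
        have : unb G U τ x ∪ prv U τ x = Finset.univ := by
          rw [e1 0 hi]
          ext y
          simp only [Finset.mem_union, h4, prv, hx, hi, if_false, Finset.mem_filter,
            Finset.mem_univ, true_and, iff_true, zero_add]
          by_cases hy : y = G.sink
          · subst hy
            exact Or.inr ⟨h1, by simpa using h2⟩
          · exact Or.inl ⟨hy, Or.inr (h0.pos hy)⟩
        rw [this]
        exact le_rfl
      · have : η x < G.degIn (G.U1 η Q i) x := by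
          have := m1
          simp only [Graph.U1, Finset.mem_filter] at this
          exact this.2.resolve_left m3.1
        refine lt_of_lt_of_le this (degIn_mono ?_ x)
        rw [e1 _ hi]
        intro y hy
        rw [h4] at hy
        simp only [Finset.mem_union, h4, prv, hx, hi, if_false, Finset.mem_filter,
            Finset.mem_univ, true_and]
        by_cases hyU : y ∈ U
        · exact Or.inl ⟨hy.1, Or.inl hyU⟩
        · have := hy.2.resolve_left hyU
          by_cases hc : i + 1 < τ y
          · exact Or.inl ⟨hy.1, Or.inr hc⟩
          · exact Or.inr ⟨hyU, by omega⟩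

lemma Lev.notQ {η Q U τ} (h : Lev G η Q U τ) {x : α} (hs : x ≠ G.sink) (hx : x ∉ U) :
    x ∉ Q := by
  have hpos := h.pos hs
  obtain ⟨h1, h2, h3, h4, h5⟩ := h
  intro hQ
  have : ∀ i, x ∈ G.U1 η Q i := by
    intro i
    induction i with
    | zero => simp [Graph.U1, Graph.VSet, hs]
    | succ n ih => simp only [Graph.U1, Finset.mem_filter]; exact ⟨ih, Or.inl hQ⟩
  rcases ((h4 _ x).1 (this (τ x))).2 with h | h
  · exact hx h
  · omega

/-! ### Stabilization -/

lemma stab (f : ℕ → Finset α) (F : Finset α → Finset α) (hF : ∀ S, F S ⊆ S)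
    (hf : ∀ i, f (i + 1) = F (f i)) :
    ∀ n, Fintype.card α ≤ n → f n = f (Fintype.card α) := by
  have h1 : ∀ i, f (i + 1) = f i ∨ (f i).card + i ≤ Fintype.card α := by
    intro i
    induction i with
    | zero => right; simpa using Finset.card_le_univ (f 0)
    | succ i ih =>
      by_cases hc : f (i + 1) = f i
      · left
        rw [hf (i + 1), hc, ← hf i, hc]
      · right
        have h2 := ih.resolve_left hc
        have h3 : f (i + 1) ⊂ f i := by
          refine lt_of_le_of_ne ?_ hc
          rw [hf i]; exact hF _
        have := Finset.card_lt_card h3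
        omega
  have h2 : f (Fintype.card α + 1) = f (Fintype.card α) := by
    rcases h1 (Fintype.card α) with h | h
    · exact h
    · have : f (Fintype.card α) = ∅ := Finset.card_eq_zero.1 (by omega)
      have h3 := hF (f (Fintype.card α))
      rw [← hf, this] at h3
      rw [this]
      exact Finset.subset_empty.1 h3
  intro n hn
  induction n, hn using Nat.le_induction with
  | base => rfl
  | succ n _ ih => rw [hf n, ih, ← hf, h2]

lemma anti (f : ℕ → Finset α) (hf : ∀ i, f (i + 1) ⊆ f i) : Antitone f :=
  antitone_nat_of_succ_le hf

lemma U1_anti (η : α → ℕ) (Q : Finset α) : Antitone (G.U1 η Q) :=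
  anti _ fun i => by simp only [Graph.U1]; exact Finset.filter_subset _ _

lemma U2_anti (η : α → ℕ) (Q : Finset α) : Antitone (G.U2 η Q) :=
  anti _ fun i => by simp only [Graph.U2]; exact Finset.filter_subset _ _

lemma U1_stab (η : α → ℕ) (Q : Finset α) (n : ℕ) (hn : Fintype.card α ≤ n) :
    G.U1 η Q n = G.U1lim η Q :=
  stab (G.U1 η Q) (fun S => S.filter fun x => x ∈ Q ∨ η x < G.degIn S x)
    (fun S => Finset.filter_subset _ _) (fun i => by
      ext x; simp only [Graph.U1, Finset.mem_filter]) n hn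

lemma U2_stab (η : α → ℕ) (Q : Finset α) (n : ℕ) (hn : Fintype.card α ≤ n) :
    G.U2 η Q n = G.U2 η Q (Fintype.card α) :=
  stab (G.U2 η Q) (fun S => S.filter fun x => η x < G.degIn S x)
    (fun S => Finset.filter_subset _ _) (fun i => by
      ext x; simp only [Graph.U2, Finset.mem_filter]) n hn

lemma U2_empty {η : α → ℕ} (h : G.Recurrent η) (Q : Finset α) :
    G.U2 η Q (Fintype.card α) = ∅ := by
  by_contra hne
  have hsub : G.U2 η Q (Fintype.card α) ⊆ G.VSet := by
    refine (U2_anti η Q (Nat.zero_le _)).trans ?_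
    show G.U1 η Q _ ⊆ G.U1 η Q 0
    exact U1_anti η Q (Nat.zero_le _)
  obtain ⟨x, hx, hle⟩ := h.2 _ hsub (Finset.nonempty_iff_ne_empty.2 hne)
  have h2 := U2_stab (G := G) η Q (Fintype.card α + 1) (by omega)
  rw [← h2] at hx
  simp only [Graph.U2, Finset.mem_filter] at hx
  omega

/-- canonical time -/
noncomputable def tau (G : Sandpile.Graph α) (η : α → ℕ) (Q : Finset α) (x : α) : ℕ :=
  if x ∈ G.U1lim η Q then G.p2time η Q x else G.p1time η Q x

lemma lev_of_rec {η : α → ℕ} (h : G.Recurrent η) (Q : Finset α) :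
    Lev G η Q (G.U1lim η Q) (tau G η Q) := by
  have hsink : ∀ i, G.sink ∉ G.U1 η Q i := by
    intro i hi
    have := U1_anti η Q (Nat.zero_le i) hi
    simp [Graph.U1, Graph.VSet] at this
  have hsl : G.sink ∉ G.U1lim η Q := hsink _
  refine ⟨hsl, ?_, rfl, ?_, ?_⟩
  · rw [tau, if_neg hsl]
    exact Nat.le_zero.1 (Nat.sInf_le (hsink 0))
  · intro i x
    constructor
    · intro hx
      refine ⟨fun hh => hsink i (hh ▸ hx), ?_⟩
      by_cases hl : x ∈ G.U1lim η Q
      · exact Or.inl hl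
      · right
        rw [tau, if_neg hl]
        by_contra hc
        have hm : G.p1time η Q x ∈ {i : ℕ | x ∉ G.U1 η Q i} := Nat.sInf_mem ⟨_, hl⟩
        exact hm (U1_anti η Q (not_lt.1 hc) hx)
    · rintro ⟨hs, hx⟩
      by_cases hl : x ∈ G.U1lim η Q
      · rcases le_total i (Fintype.card α) with hi | hi
        · exact U1_anti η Q hi hl
        · rw [U1_stab η Q i hi]; exact hl
      · have h1 := hx.resolve_left hl
        rw [tau, if_neg hl] at h1
        by_contra hc
        exact Nat.notMem_of_lt_sInf h1 hc
  · intro i x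
    constructor
    · intro hx
      have hl : x ∈ G.U1lim η Q := U2_anti η Q (Nat.zero_le i) hx
      refine ⟨hl, ?_⟩
      rw [tau, if_pos hl]
      by_contra hc
      have hm : G.p2time η Q x ∈ {i : ℕ | x ∉ G.U2 η Q i} :=
        Nat.sInf_mem ⟨Fintype.card α, by simp [U2_empty h Q]⟩
      exact hm (U2_anti η Q (not_lt.1 hc) hx)
    · rintro ⟨hl, h1⟩
      rw [tau, if_pos hl] at h1
      by_contra hc
      exact Nat.notMem_of_lt_sInf h1 hc

/-! ### From a tree to a sandpile -/

lemma Compat.pos {Q U τ} {p : α → α} (h : Compat G Q U τ p) {x : α} (hx : x ≠ G.sink) :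
    0 < τ x := by
  obtain ⟨a1, a2, a3, a4⟩ := h.2.2 x hx
  by_cases c1 : x ∈ U
  · by_cases c2 : p x ∈ U
    · rw [a3 c1 c2]; omega
    · rw [a4 c1 c2]; omega
  · rw [a2 c1]; omega

lemma lev_of_bounds {η Q U τ} {p : α → α} (h : Compat G Q U τ p) (hb : Bounds G η U τ) :
    Lev G η Q U τ := by
  have h1 := h.1
  have h2 := h.2.1
  have hU : ∀ {y}, y ∈ U → y ≠ G.sink := fun hy hh => h1 (hh ▸ hy)
  -- phase-two comparison
  have hZ : ∀ x i, x ∈ U → i < τ x → ∀ Z : Finset α, (∀ y, y ∈ Z ↔ y ∈ U ∧ i < τ y) →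
      (η x < G.degIn Z x ↔ i + 1 < τ x) := by
    intro x i hx hi Z hZ
    obtain ⟨b1, b2⟩ := hb x (hU hx)
    constructor
    · intro hlt
      by_contra hc
      have : unb G U τ x = Z := by
        ext y
        have : τ x - 1 = i := by omega
        simp only [unb, hx, if_true, hZ, Finset.mem_filter, Finset.mem_univ, true_and, this]
        exact ⟨fun h => h.2, fun h => ⟨hU h.1, h⟩⟩
      rw [this] at b1
      omega
    · intro hlt
      refine lt_of_lt_of_le b2 ?_
      rw [← degIn_union (disj_unb_prv h1 h2 (by omega))]
      apply degIn_mono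
      intro y hy
      rw [hZ]
      simp only [Finset.mem_union, unb, prv, hx, if_true, Finset.mem_filter, Finset.mem_univ,
        true_and] at hy
      rw [if_neg (by omega)] at hy
      rcases hy with ⟨_, a, b⟩ | ⟨a, b⟩
      · exact ⟨a, by omega⟩
      · exact ⟨a, by omega⟩
  have hW : ∀ i x, x ∈ G.U1 η Q i ↔ x ≠ G.sink ∧ (x ∈ U ∨ i < τ x) := by
    intro i
    induction i with
    | zero =>
      intro x
      simp only [Graph.U1, Graph.VSet, Finset.mem_erase, Finset.mem_univ, and_true]
      exact ⟨fun hx => ⟨hx, Or.inr (h.pos hx)⟩, fun hx => hx.1⟩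
    | succ i ih =>
      intro x
      simp only [Graph.U1, Finset.mem_filter]
      rw [ih]
      by_cases hs : x = G.sink
      · simp [hs]
      obtain ⟨b1, b2⟩ := hb x hs
      obtain ⟨a1, a2, a3, a4⟩ := h.2.2 x hs
      have hpos := h.pos hs
      by_cases hx : x ∈ U
      · refine iff_of_true ⟨⟨hs, Or.inl hx⟩, ?_⟩ ⟨hs, Or.inl hx⟩
        by_cases hq : x ∈ Q
        · exact Or.inl hq
        · right
          have hpx : p x ∈ U := (a1.1 hx).resolve_left hq
          have ht := a3 hx hpx
          have hpp := h.pos (hU hpx)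
          have := (hZ x 0 hx hpos (U.filter fun y => 0 < τ y) (by simp)).2 (by omega)
          refine lt_of_lt_of_le this (degIn_mono ?_ x)
          intro y hy
          rw [Finset.mem_filter] at hy
          rw [ih]
          exact ⟨hU hy.1, Or.inl hy.1⟩
      · have hq : x ∉ Q := fun hq => hx (a1.2 (Or.inl hq))
        simp only [hs, ne_eq, not_false_eq_true, hx, hq, false_or, true_and]
        constructor
        · rintro ⟨hi, hlt⟩
          by_contra hc
          have : unb G U τ x = G.U1 η Q i := by
            ext y
            have : τ x - 1 = i := by omega
            simp only [unb, hx, if_false, ih, Finset.mem_filter, Finset.mem_univ, true_and, this]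
          rw [this] at b1
          omega
        · intro hlt
          refine ⟨by omega, lt_of_lt_of_le b2 ?_⟩
          rw [← degIn_union (disj_unb_prv h1 h2 (by omega))]
          apply degIn_mono
          intro y hy
          rw [ih]
          simp only [Finset.mem_union, unb, prv, hx, if_false, Finset.mem_filter,
            Finset.mem_univ, true_and] at hy
          rcases hy with ⟨a, b | b⟩ | ⟨a, b⟩
          · exact ⟨a, Or.inl b⟩
          · exact ⟨a, Or.inr (by omega)⟩
          · refine ⟨?_, Or.inr (by omega)⟩
            rintro rfl
            omega
  have hlim : G.U1lim η Q = U := by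
    obtain ⟨N, hN⟩ : ∃ N, ∀ y, τ y ≤ N :=
      ⟨Finset.univ.sup τ, fun y => Finset.le_sup (f := τ) (Finset.mem_univ y)⟩
    rw [← U1_stab η Q (Fintype.card α + N) (by omega)]
    ext y
    rw [hW]
    constructor
    · rintro ⟨_, a | a⟩
      · exact a
      · have := hN y; omega
    · exact fun hy => ⟨hU hy, Or.inl hy⟩
  refine ⟨h1, h2, hlim, hW, ?_⟩
  intro i
  induction i with
  | zero =>
    intro x
    simp only [Graph.U2]
    rw [hlim]
    exact ⟨fun hx => ⟨hx, h.pos (hU hx)⟩, fun hx => hx.1⟩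
  | succ i ih =>
    intro x
    simp only [Graph.U2, Finset.mem_filter]
    rw [ih]
    constructor
    · rintro ⟨⟨a, b⟩, c⟩
      exact ⟨a, (hZ x i a b _ ih).1 c⟩
    · rintro ⟨a, b⟩
      exact ⟨⟨a, by omega⟩, (hZ x i a (by omega) _ ih).2 b⟩

lemma rec_of_bounds {η Q U τ} {p : α → α} (h : Compat G Q U τ p) (hb : Bounds G η U τ) :
    G.Recurrent η := by
  constructor
  · intro x hx
    have hs : x ≠ G.sink := by simpa [Graph.VSet] using hx
    obtain ⟨b1, b2⟩ := hb x hs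
    rw [← degIn_union (disj_unb_prv h.1 h.2.1 (h.pos hs))] at b2
    exact lt_of_lt_of_le b2 (degIn_mono (Finset.subset_univ _) x)
  · intro F hF hne
    have hFs : ∀ y ∈ F, y ≠ G.sink := fun y hy => by simpa [Graph.VSet] using hF hy
    suffices hx : ∃ x ∈ F, F ⊆ unb G U τ x by
      obtain ⟨x, hx, hsub⟩ := hx
      exact ⟨x, hx, (degIn_mono hsub x).trans (hb x (hFs x hx)).1⟩
    by_cases hc : (F.filter fun y => y ∉ U).Nonempty
    · obtain ⟨x, hx, hmin⟩ := Finset.exists_min_image _ τ hc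
      rw [Finset.mem_filter] at hx
      refine ⟨x, hx.1, fun y hy => ?_⟩
      simp only [unb, hx.2, if_false, Finset.mem_filter, Finset.mem_univ, true_and]
      refine ⟨hFs y hy, ?_⟩
      by_cases hyU : y ∈ U
      · exact Or.inl hyU
      · have := hmin y (Finset.mem_filter.2 ⟨hy, hyU⟩)
        have := h.pos (hFs y hy)
        right; omega
    · obtain ⟨x, hx, hmin⟩ := Finset.exists_min_image _ τ hne
      have hFU : ∀ y ∈ F, y ∈ U := by
        intro y hy
        by_contra hyU
        exact hc ⟨y, Finset.mem_filter.2 ⟨hy, hyU⟩⟩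
      refine ⟨x, hx, fun y hy => ?_⟩
      simp only [unb, hFU x hx, if_true, Finset.mem_filter, Finset.mem_univ, true_and]
      have := hmin y hy
      have := h.pos (hFs y hy)
      exact ⟨hFs y hy, hFU y hy, by omega⟩

/-! ### Counting edges -/

instance finiteOEdge : Finite G.OEdge := by
  let f : G.OEdge → Σ x : α, Σ y : α, Fin (G.b x y) := fun e => ⟨e.1.1, e.1.2.1, ⟨e.1.2.2, e.2⟩⟩
  refine Finite.of_injective f ?_
  rintro ⟨⟨a, b, c⟩, h⟩ ⟨⟨a', b', c'⟩, h'⟩ he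
  simp only [f, Sigma.mk.injEq] at he
  obtain ⟨rfl, he⟩ := he
  simp only [heq_eq_eq, Sigma.mk.injEq] at he
  obtain ⟨rfl, he⟩ := he
  simp only [heq_eq_eq, Fin.mk.injEq] at he
  subst he
  rfl

lemma ncard_edges (x : α) (S : Finset α) :
    {f : G.OEdge | f.1.1 = x ∧ f.1.2.1 ∈ S}.ncard = G.degIn S x := by
  have : G.degIn S x = (S.sigma fun y => Finset.range (G.b x y)).card := by
    rw [Finset.card_sigma]; simp [Graph.degIn]
  rw [this, ← Set.ncard_coe_finset]
  refine Set.ncard_congr (fun f _ => ⟨f.1.2.1, f.1.2.2⟩) ?_ ?_ ?_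
  · rintro ⟨⟨a, b, c⟩, h⟩ ⟨rfl, h2⟩
    simp at h h2 ⊢
    exact ⟨h2, h⟩
  · rintro ⟨⟨a, b, c⟩, h⟩ ⟨⟨a', b', c'⟩, h'⟩ ⟨rfl, h2⟩ ⟨h3, h4⟩ he
    simp at he h3
    obtain ⟨rfl, rfl⟩ := he
    subst h3
    rfl
  · rintro ⟨y, m⟩ hm
    simp at hm
    exact ⟨⟨(x, y, m), hm.2⟩, ⟨rfl, hm.1⟩, rfl⟩

lemma rank_lt {β : Type*} [Finite β] (S : Set β) (lt : β → β → Prop) (hirr : ∀ e, ¬ lt e e)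
    {e : β} (he : e ∈ S) : {f | f ∈ S ∧ lt f e}.ncard < S.ncard := by
  apply Set.ncard_lt_ncard _ (Set.toFinite _)
  refine ⟨fun f hf => hf.1, fun hsub => hirr e (hsub he).2⟩

lemma rank_inj {β : Type*} [Finite β] (S : Set β) (lt : β → β → Prop) (hirr : ∀ e, ¬ lt e e)
    (htr : ∀ e f g, lt e f → lt f g → lt e g) (htri : ∀ e ∈ S, ∀ f ∈ S, e = f ∨ lt e f ∨ lt f e)
    {e e' : β} (he : e ∈ S) (he' : e' ∈ S)
    (heq : {f | f ∈ S ∧ lt f e}.ncard = {f | f ∈ S ∧ lt f e'}.ncard) : e = e' := by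
  have key : ∀ e ∈ S, ∀ e' ∈ S, lt e e' →
      {f | f ∈ S ∧ lt f e}.ncard < {f | f ∈ S ∧ lt f e'}.ncard := by
    intro e he e' he' hlt
    apply Set.ncard_lt_ncard _ (Set.toFinite _)
    refine ⟨fun f hf => ⟨hf.1, htr _ _ _ hf.2 hlt⟩, fun hsub => ?_⟩
    exact hirr e (hsub (show e ∈ {f | f ∈ S ∧ lt f e'} from ⟨he, hlt⟩)).2
  rcases htri e he e' he' with h | h | h
  · exact h
  · have := key _ he _ he' h; omega
  · have := key _ he' _ he h; omega

lemma rank_surj {β : Type*} [Finite β] (S : Set β) (lt : β → β → Prop) (hirr : ∀ e, ¬ lt e e)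
    (htr : ∀ e f g, lt e f → lt f g → lt e g) (htri : ∀ e ∈ S, ∀ f ∈ S, e = f ∨ lt e f ∨ lt f e)
    (j : ℕ) (hj : j < S.ncard) : ∃ e ∈ S, {f | f ∈ S ∧ lt f e}.ncard = j := by
  have hfin : S.Finite := Set.toFinite S
  have h := Finset.surjOn_of_injOn_of_card_le (s := hfin.toFinset)
    (t := Finset.range S.ncard) (fun e => {f | f ∈ S ∧ lt f e}.ncard)
    (fun e he => by
      have := rank_lt S lt hirr (e := e) (by simpa using he)
      simpa using this)
    (fun e he e' he' heq => rank_inj S lt hirr htr htri (by simpa using he) (by simpa using he') heq)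
    (by rw [Finset.card_range, Set.ncard_eq_toFinset_card S hfin])
  obtain ⟨e, he, hej⟩ := h (show j ∈ (Finset.range S.ncard : Set ℕ) by simpa using hj)
  exact ⟨e, by simpa using he, hej⟩

/-! ### The burning bijection -/

lemma Lev.edgeSpec_iff {η Q U τ} (h : Lev G η Q U τ) (lt : α → G.OEdge → G.OEdge → Prop)
    {x : α} (hs : x ≠ G.sink) (e : G.OEdge) :
    G.EdgeSpec lt η Q x e ↔ e ∈ {f : G.OEdge | f.1.1 = x ∧ f.1.2.1 ∈ prv U τ x} ∧
      {f | f ∈ {f : G.OEdge | f.1.1 = x ∧ f.1.2.1 ∈ prv U τ x} ∧ lt x f e}.ncard =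
        η x - G.degIn (unb G U τ x) x := by
  unfold Graph.EdgeSpec Graph.jX
  rw [h.prev hs, h.before x]
  have h1 := degIn_compl (G := G) (unb G U τ x) x
  have h2 : η x + G.degIn (Finset.univ \ unb G U τ x) x - G.deg x =
      η x - G.degIn (unb G U τ x) x := by omega
  rw [h2]
  simp only [Set.mem_ofPred_eq, and_assoc]

/-- Compatibility of the orders. -/
def Ord (lt : α → G.OEdge → G.OEdge → Prop) : Prop :=
  (∀ x : α, ∀ e : G.OEdge, ¬ lt x e e) ∧
  (∀ x : α, ∀ e f g : G.OEdge, lt x e f → lt x f g → lt x e g) ∧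
  (∀ x : α, ∀ e f : G.OEdge, e.1.1 = x → f.1.1 = x → e = f ∨ lt x e f ∨ lt x f e)

lemma edgeSpec_exists {η Q U τ} (h : Lev G η Q U τ) (hb : Bounds G η U τ)
    {lt : α → G.OEdge → G.OEdge → Prop} (ho : Ord lt) {x : α} (hs : x ≠ G.sink) :
    ∃ e, G.EdgeSpec lt η Q x e := by
  obtain ⟨b1, b2⟩ := hb x hs
  obtain ⟨e, he, hr⟩ := rank_surj {f : G.OEdge | f.1.1 = x ∧ f.1.2.1 ∈ prv U τ x} (lt x)
    (ho.1 x) (ho.2.1 x) (fun e he f hf => ho.2.2 x e f he.1 hf.1)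
    (η x - G.degIn (unb G U τ x) x) (by rw [ncard_edges]; omega)
  exact ⟨e, (h.edgeSpec_iff lt hs e).2 ⟨he, hr⟩⟩

lemma edgeSpec_unique {η Q U τ} (h : Lev G η Q U τ)
    {lt : α → G.OEdge → G.OEdge → Prop} (ho : Ord lt) {x : α} (hs : x ≠ G.sink)
    {e e' : G.OEdge} (he : G.EdgeSpec lt η Q x e) (he' : G.EdgeSpec lt η Q x e') : e = e' := by
  rw [h.edgeSpec_iff lt hs] at he he'
  exact rank_inj {f : G.OEdge | f.1.1 = x ∧ f.1.2.1 ∈ prv U τ x} (lt x)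
    (ho.1 x) (ho.2.1 x) (fun e he f hf => ho.2.2 x e f he.1 hf.1) he.1 he'.1
    (he.2.trans he'.2.symm)

lemma tree_eq {η Q U τ} (h : Lev G η Q U τ)
    {lt : α → G.OEdge → G.OEdge → Prop} (ho : Ord lt) {p : α → α} {k : α → ℕ}
    (hpk : ∀ x, x ≠ G.sink → ∃ e, G.EdgeSpec lt η Q x e ∧ e.1 = (x, p x, k x)) :
    G.undir '' G.treeOf lt η Q = PT G p k := by
  ext q
  constructor
  · rintro ⟨e, ⟨x, hx, he⟩, rfl⟩
    have hs : x ≠ G.sink := by simpa [Graph.VSet] using hx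
    obtain ⟨e', he', h2⟩ := hpk x hs
    have := edgeSpec_unique h ho hs he he'
    subst this
    refine ⟨x, hs, ?_⟩
    rw [Graph.undir, h2]
  · rintro ⟨x, hs, rfl⟩
    obtain ⟨e, he, h2⟩ := hpk x hs
    refine ⟨e, ⟨x, by simp [Graph.VSet, hs], he⟩, ?_⟩
    rw [Graph.undir, h2]

lemma Compat.head {Q U τ} {p : α → α} (h : Compat G Q U τ p) {x : α} (hx : x ≠ G.sink) :
    p x ∈ prv U τ x := by
  obtain ⟨a1, a2, a3, a4⟩ := h.2.2 x hx
  simp only [prv, Finset.mem_filter, Finset.mem_univ, true_and]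
  by_cases c1 : x ∈ U
  · rw [if_pos c1]
    by_cases c2 : p x ∈ U
    · have h1 := a3 c1 c2
      have h2 := h.pos (x := p x) (fun hh => h.1 (hh ▸ c2))
      rw [if_neg (by omega)]
      exact ⟨c2, by omega⟩
    · rw [if_pos (a4 c1 c2)]; exact c2
  · rw [if_neg c1]
    refine ⟨fun c2 => c1 (a1.2 (Or.inr c2)), ?_⟩
    have := a2 c1
    omega

lemma compat_of_head {η Q U τ} (h : Lev G η Q U τ) (hb : Bounds G η U τ) {p : α → α}
    (hp : ∀ x, x ≠ G.sink → p x ∈ prv U τ x) : Compat G Q U τ p := by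
  refine ⟨h.1, h.2.1, fun x hs => ?_⟩
  have hpos := h.pos hs
  have hx := hp x hs
  simp only [prv, Finset.mem_filter, Finset.mem_univ, true_and] at hx
  by_cases c1 : x ∈ U
  · rw [if_pos c1] at hx
    by_cases c2 : τ x = 1
    · rw [if_pos c2] at hx
      have hq : x ∈ Q := by
        by_contra hq
        -- otherwise `x` would burn in phase one
        have hm : x ∈ G.U1 η Q (Fintype.card α + 1) := (h.2.2.2.1 _ x).2 ⟨hs, Or.inl c1⟩
        simp only [Graph.U1, Finset.mem_filter] at hm
        have h2 := hm.2.resolve_left hq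
        have h3 : G.U1 η Q (Fintype.card α) = U := h.2.2.1
        rw [h3] at h2
        have h4 := (hb x hs).1
        have h5 : unb G U τ x = U := by
          ext y
          simp only [unb, c1, if_true, c2, Finset.mem_filter, Finset.mem_univ, true_and,
            Nat.sub_self]
          constructor
          · exact fun h => h.2.1
          · intro hy
            have : y ≠ G.sink := fun hh => h.1 (hh ▸ hy)
            exact ⟨this, hy, h.pos this⟩
        rw [h5] at h4
        omega
      exact ⟨iff_of_true c1 (Or.inl hq), fun h => absurd c1 h, fun _ h => absurd h hx,
        fun _ _ => c2⟩
    · rw [if_neg c2] at hx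
      exact ⟨iff_of_true c1 (Or.inr hx.1), fun h => absurd c1 h, fun _ _ => by omega,
        fun _ h => absurd hx.1 h⟩
  · rw [if_neg c1] at hx
    have hq := h.notQ hs c1
    refine ⟨iff_of_false c1 ?_, fun _ => by omega, fun h => absurd h c1, fun h => absurd h c1⟩
    rintro (h | h)
    · exact hq h
    · exact hx.1 h

lemma burnOrder_lt {η : α → ℕ} (hη : G.Recurrent η) (Q : Finset α) {x y : α}
    (hs : x ≠ G.sink) (hy : y ∈ prv (G.U1lim η Q) (tau G η Q) x) :
    G.burnOrder η Q y < G.burnOrder η Q x := by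
  have hL := lev_of_rec hη Q
  have hpos := hL.pos hs
  have hle : ∀ z, z ∉ G.U1lim η Q → G.p1time η Q z ≤ Fintype.card α :=
    fun z hz => Nat.sInf_le hz
  simp only [prv, Finset.mem_filter, Finset.mem_univ, true_and] at hy
  unfold Graph.burnOrder
  by_cases c1 : x ∈ G.U1lim η Q
  · rw [if_pos c1] at hy ⊢
    have e1 := hL.p2 c1
    by_cases c3 : y ∈ G.U1lim η Q
    · have e2 := hL.p2 c3
      rw [if_pos c3]
      split_ifs at hy with c2
      · exact absurd c3 hy
      · omega
    · have := hle y c3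
      rw [if_neg c3]
      omega
  · rw [if_neg c1] at hy ⊢
    rw [if_neg hy.1, hL.p1 c1, hL.p1 hy.1]
    omega

lemma main_of_rec {η : α → ℕ} (hη : G.Recurrent η) (Q : Finset α)
    {lt : α → G.OEdge → G.OEdge → Prop} (ho : Ord lt) :
    ∃ p k, PS G p k (G.burnOrder η Q) ∧ Compat G Q (G.U1lim η Q) (tau G η Q) p ∧
      G.undir '' G.treeOf lt η Q = PT G p k ∧
      ∀ x, x ≠ G.sink → ∃ e, G.EdgeSpec lt η Q x e ∧ e.1 = (x, p x, k x) := by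
  have hL := lev_of_rec hη Q
  have hb := hL.bounds hη.1
  have hex : ∀ x, ∃ p k, x ≠ G.sink → ∃ e, G.EdgeSpec lt η Q x e ∧ e.1 = (x, p, k) := by
    intro x
    by_cases hs : x = G.sink
    · exact ⟨x, 0, fun h => absurd hs h⟩
    · obtain ⟨e, he⟩ := edgeSpec_exists hL hb ho hs
      refine ⟨e.1.2.1, e.1.2.2, fun _ => ⟨e, he, ?_⟩⟩
      rw [← he.1]
  choose p k hpk using hex
  have hhead : ∀ x, x ≠ G.sink → p x ∈ prv (G.U1lim η Q) (tau G η Q) x := by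
    intro x hs
    obtain ⟨e, he, h2⟩ := hpk x hs
    have := ((hL.edgeSpec_iff lt hs e).1 he).1.2
    rw [h2] at this
    exact this
  refine ⟨p, k, ?_, compat_of_head hL hb hhead, tree_eq hL ho hpk, hpk⟩
  intro x hs
  refine ⟨?_, burnOrder_lt hη Q hs (hhead x hs)⟩
  obtain ⟨e, he, h2⟩ := hpk x hs
  have := e.2
  rw [h2] at this
  exact this

end SPaux


/-- The burning bijection based on `Q` (with respect to any choice
of strict total orders `<_x` on the edges incident to each `x ∈ V`) is a bijection
from `R_G` onto the set of spanning trees of `G`; moreover each tree edge `e_x` joins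
`x` to a vertex burnt strictly before `x`. -/
theorem statement_16 {α : Type*} [Fintype α] [DecidableEq α] (G : Sandpile.Graph α)
    (hG : G.IsSandpileGraph) (Q : Finset α) (hQ : Q ⊆ G.VSet)
    (lt : α → G.OEdge → G.OEdge → Prop)
    (hirr : ∀ x : α, ∀ e : G.OEdge, ¬ lt x e e)
    (htrans : ∀ x : α, ∀ e f g : G.OEdge, lt x e f → lt x f g → lt x e g)
    (htri : ∀ x : α, ∀ e f : G.OEdge, e.1.1 = x → f.1.1 = x →
      e = f ∨ lt x e f ∨ lt x f e) :
    Set.BijOn (fun η => G.undir '' G.treeOf lt η Q)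
        {η : α → ℕ | η G.sink = 0 ∧ G.Recurrent η}
        {t : Set (Sym2 α × ℕ) | G.IsSpanningTreeSet t} ∧
      ∀ η : α → ℕ, G.Recurrent η → ∀ e ∈ G.treeOf lt η Q,
        G.burnOrder η Q e.1.2.1 < G.burnOrder η Q e.1.1 := by
  have ho : SPaux.Ord lt := ⟨hirr, htrans, htri⟩
  refine ⟨⟨?_, ?_, ?_⟩, ?_⟩
  · rintro η ⟨_, hη⟩
    obtain ⟨p, k, hPS, _, hT, _⟩ := SPaux.main_of_rec hη Q ho
    show G.IsSpanningTreeSet (G.undir '' G.treeOf lt η Q)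
    rw [hT]
    exact SPaux.PT_isTree G hPS
  · rintro η ⟨hη0, hη⟩ ξ ⟨hξ0, hξ⟩ heq
    have heq' : G.undir '' G.treeOf lt η Q = G.undir '' G.treeOf lt ξ Q := heq
    obtain ⟨p, k, hPS, hC, hT, hE⟩ := SPaux.main_of_rec hη Q ho
    obtain ⟨p', k', hPS', hC', hT', hE'⟩ := SPaux.main_of_rec hξ Q ho
    have hu := SPaux.PS_unique G hPS (hT.symm.trans (heq'.trans hT'))
    obtain ⟨hU, hτ⟩ := SPaux.Compat_unique G Q hPS (fun x hx => (hu x hx).1) hC hC'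
    have hL := SPaux.lev_of_rec hη Q
    have hL' := SPaux.lev_of_rec hξ Q
    have hb := hL.bounds hη.1
    have hb' := hL'.bounds hξ.1
    rw [← hU, ← hτ] at hL' hb'
    funext x
    by_cases hs : x = G.sink
    · rw [hs, hη0, hξ0]
    · obtain ⟨e, he, h2⟩ := hE x hs
      obtain ⟨e', he', h2'⟩ := hE' x hs
      have hee : e = e' := Subtype.ext (by rw [h2, h2', (hu x hs).1, (hu x hs).2])
      subst hee
      have h3 := ((hL.edgeSpec_iff lt hs e).1 he).2
      have h4 := ((hL'.edgeSpec_iff lt hs e).1 he').2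
      have h5 := (hb x hs).1
      have h6 := (hb' x hs).1
      rw [h3] at h4
      omega
  · intro t ht
    obtain ⟨p, k, r, hPS, hPT⟩ := SPaux.tree_PS G hG ht
    obtain ⟨U, τ, hC⟩ := SPaux.Compat_exists G Q hPS
    let η : α → ℕ := fun x => if hs : x = G.sink then 0 else
      G.degIn (SPaux.unb G U τ x) x +
        {f | f ∈ {f : G.OEdge | f.1.1 = x ∧ f.1.2.1 ∈ SPaux.prv U τ x} ∧
          lt x f ⟨(x, p x, k x), (hPS x hs).1⟩}.ncard
    have hmem : ∀ x (hs : x ≠ G.sink), (⟨(x, p x, k x), (hPS x hs).1⟩ : G.OEdge) ∈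
        {f : G.OEdge | f.1.1 = x ∧ f.1.2.1 ∈ SPaux.prv U τ x} :=
      fun x hs => ⟨rfl, hC.head hs⟩
    have hηx : ∀ x (hs : x ≠ G.sink), η x = G.degIn (SPaux.unb G U τ x) x +
        {f | f ∈ {f : G.OEdge | f.1.1 = x ∧ f.1.2.1 ∈ SPaux.prv U τ x} ∧
          lt x f ⟨(x, p x, k x), (hPS x hs).1⟩}.ncard := fun x hs => dif_neg hs
    have hb : SPaux.Bounds G η U τ := by
      intro x hs
      have h1 := SPaux.rank_lt _ (lt x) (hirr x) (hmem x hs)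
      rw [SPaux.ncard_edges] at h1
      rw [hηx x hs]
      exact ⟨by omega, by omega⟩
    have hrec := SPaux.rec_of_bounds hC hb
    have hL := SPaux.lev_of_bounds hC hb
    refine ⟨η, ⟨dif_pos rfl, hrec⟩, ?_⟩
    show G.undir '' G.treeOf lt η Q = t
    rw [← hPT]
    refine SPaux.tree_eq hL ho (fun x hs => ⟨⟨(x, p x, k x), (hPS x hs).1⟩, ?_, rfl⟩)
    rw [hL.edgeSpec_iff lt hs]
    refine ⟨hmem x hs, ?_⟩
    rw [hηx x hs]
    omega
  · rintro η hη e ⟨x, hx, he⟩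
    have hs : x ≠ G.sink := by simpa [Graph.VSet] using hx
    have hL := SPaux.lev_of_rec hη Q
    have h1 := ((hL.edgeSpec_iff lt hs e).1 he).1
    rw [h1.1]
    exact SPaux.burnOrder_lt hη Q hs h1.2
end

section
/- Let G = (V ∪ {s}, E) be a finite sandpile graph, Q ⊆ V, and fix for each x ∈ V a strict total order <_x on the edges of G incident to x. For η ∈ R_G, let t(η) = { e_x : x ∈ V } be the spanning tree assigned to η by the burning bijection based on Q, each edge e_x oriented from x toward its other endpoint. Then η ∈ E_{V,Q} (phase one of burning based on Q burns all of V \ Q) if and only if t(η) contains no edge pointing from V \ Q into Q, i.e., for every x ∈ V \ Q the endpoint of e_x other than x does not lie in Q. -/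
open scoped Classical

open Sandpile

theorem s17_stab {α : Type*} [Fintype α] (S : ℕ → Finset α)
    (hsub : ∀ i, S (i + 1) ⊆ S i) (hst : ∀ i, S (i + 1) = S i → S (i + 2) = S (i + 1)) :
    S (Fintype.card α + 1) = S (Fintype.card α) := by
  have key : ∀ i, S (i + 1) = S i ∨ (S i).card + i ≤ Fintype.card α := by
    intro i
    induction i with
    | zero => right; simpa using Finset.card_le_univ (S 0)
    | succ k ih =>
      by_cases h : S (k + 1) = S k
      · left; exact hst k h
      · right
        have h1 := ih.resolve_left h
        have h2 := Finset.card_lt_card ((hsub k).ssubset_of_ne h)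
        omega
  rcases key (Fintype.card α) with h | h
  · exact h
  · have h0 : S (Fintype.card α) = ∅ := Finset.card_eq_zero.mp (by omega)
    have := hsub (Fintype.card α)
    rw [h0] at this ⊢
    exact Finset.subset_empty.mp this

theorem s17_rank {β : Type*} (P : Finset β) (r : β → β → Prop)
    (hirr : ∀ e, ¬ r e e) (htrans : ∀ e f g, r e f → r f g → r e g)
    (htri : ∀ e ∈ P, ∀ f ∈ P, e = f ∨ r e f ∨ r f e) (j : ℕ) (hj : j < P.card) :
    ∃ e ∈ P, (P.filter fun f => r f e).card = j := by
  have hlt : ∀ e ∈ P, ∀ f ∈ P, r e f →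
      (P.filter fun g => r g e).card < (P.filter fun g => r g f).card := by
    intro e he f hf hef
    apply Finset.card_lt_card
    refine Finset.ssubset_iff_subset_ne.mpr ⟨?_, ?_⟩
    · intro g hg
      simp only [Finset.mem_filter] at hg ⊢
      exact ⟨hg.1, htrans _ _ _ hg.2 hef⟩
    · intro h
      have : e ∈ P.filter fun g => r g f := Finset.mem_filter.mpr ⟨he, hef⟩
      rw [← h] at this
      exact hirr e (Finset.mem_filter.mp this).2
  obtain ⟨e, he, h⟩ := Finset.surj_on_of_inj_on_of_card_le (s := P) (t := Finset.range P.card)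
    (fun e _ => (P.filter fun f => r f e).card)
    (by
      intro e he
      refine Finset.mem_range.mpr (Finset.card_lt_card ?_)
      refine Finset.ssubset_iff_subset_ne.mpr ⟨Finset.filter_subset _ _, ?_⟩
      intro h
      rw [← h] at he
      exact hirr e (Finset.mem_filter.mp he).2)
    (by
      intro e f he hf h
      rcases htri e he f hf with h1 | h1 | h1
      · exact h1
      · exact absurd h (hlt e he f hf h1).ne
      · exact absurd h (hlt f hf e he h1).ne')
    (by simp) j (Finset.mem_range.mpr hj)
  exact ⟨e, he, h.symm⟩

theorem s17_edges {α : Type*} [Fintype α] [DecidableEq α] (G : Sandpile.Graph α)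
    (x : α) (B : Finset α) :
    ∃ P : Finset G.OEdge, P.card = G.degIn B x ∧
      ∀ e, e ∈ P ↔ e.1.1 = x ∧ e.1.2.1 ∈ B := by
  refine ⟨(B.sigma (fun y => (Finset.univ : Finset (Fin (G.b x y))))).image
    (fun p => (⟨(x, p.1, p.2.1), p.2.2⟩ : G.OEdge)), ?_, ?_⟩
  · rw [Finset.card_image_of_injective]
    · simp [Sandpile.Graph.degIn]
    · rintro ⟨y, k, hk⟩ ⟨z, l, hl⟩ h
      simp only [Subtype.mk.injEq, Prod.mk.injEq, true_and] at h
      obtain ⟨rfl, rfl⟩ := h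
      rfl
  · rintro ⟨⟨a, y, k⟩, hk⟩
    simp only [Finset.mem_image, Finset.mem_sigma, Finset.mem_univ, and_true]
    constructor
    · rintro ⟨⟨z, l⟩, hz, h⟩
      simp only [Subtype.mk.injEq, Prod.mk.injEq] at h
      obtain ⟨rfl, rfl, rfl⟩ := h
      exact ⟨rfl, hz⟩
    · rintro ⟨h1, h2⟩
      simp only at h1 h2 hk
      subst h1
      exact ⟨⟨y, ⟨k, hk⟩⟩, h2, rfl⟩

/-- Under the burning bijection based on `Q`, the event `E_{V,Q}`
(phase one burns all of `V \ Q`) corresponds exactly to the event that the spanning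
tree `t(η)` contains no edge pointing from `V \ Q` into `Q`. -/
theorem statement_17 {α : Type*} [Fintype α] [DecidableEq α] (G : Sandpile.Graph α)
    (hG : G.IsSandpileGraph) (Q : Finset α) (hQ : Q ⊆ G.VSet)
    (lt : α → G.OEdge → G.OEdge → Prop)
    (hirr : ∀ x : α, ∀ e : G.OEdge, ¬ lt x e e)
    (htrans : ∀ x : α, ∀ e f g : G.OEdge, lt x e f → lt x f g → lt x e g)
    (htri : ∀ x : α, ∀ e f : G.OEdge, e.1.1 = x → f.1.1 = x →
      e = f ∨ lt x e f ∨ lt x f e) :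
    ∀ η : α → ℕ, G.Recurrent η →
      (G.U1lim η Q = Q ↔
        ∀ e ∈ G.treeOf lt η Q, e.1.1 ∉ Q → e.1.2.1 ∉ Q) := by
  intro η hη
  have hQU : ∀ i, Q ⊆ G.U1 η Q i := by
    intro i
    induction i with
    | zero => exact hQ
    | succ k ih =>
      intro x hx
      simp only [Sandpile.Graph.U1, Finset.mem_filter]
      exact ⟨ih hx, Or.inl hx⟩
  have hs1 : ∀ i, G.U1 η Q (i + 1) ⊆ G.U1 η Q i := fun i => Finset.filter_subset _ _
  have hs2 : ∀ i, G.U2 η Q (i + 1) ⊆ G.U2 η Q i := fun i => Finset.filter_subset _ _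
  have hV1 : ∀ i, G.U1 η Q i ⊆ G.VSet := by
    intro i
    induction i with
    | zero => exact Finset.Subset.refl _
    | succ k ih => exact (hs1 k).trans ih
  have hU2 : ∀ i, G.U2 η Q i ⊆ G.U1lim η Q := by
    intro i
    induction i with
    | zero => exact Finset.Subset.refl _
    | succ k ih => exact (hs2 k).trans ih
  have hst1 := s17_stab (G.U1 η Q) hs1 (by
    intro i h
    simp only [Sandpile.Graph.U1] at h ⊢
    simp only [h])
  have hst2 := s17_stab (G.U2 η Q) hs2 (by
    intro i h
    simp only [Sandpile.Graph.U2] at h ⊢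
    simp only [h])
  constructor
  · intro hE e he heQ hmem
    obtain ⟨x, hx, h1, h2, -⟩ := he
    rw [h1] at heQ
    unfold Sandpile.Graph.prevBurnt at h2
    rw [if_neg (by rw [hE]; exact heQ)] at h2
    cases hk : G.p1time η Q x - 1 with
    | zero =>
      rw [hk] at h2
      simp only [Sandpile.Graph.B1, Finset.mem_singleton] at h2
      have := hQ hmem
      rw [h2] at this
      simp [Sandpile.Graph.VSet] at this
    | succ k =>
      rw [hk] at h2
      simp only [Sandpile.Graph.B1] at h2
      exact (Finset.mem_sdiff.mp h2).2 (hQU _ hmem)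
  · intro h
    refine Finset.Subset.antisymm ?_ (hQU _)
    intro x0 hx0
    by_contra hx0Q
    have hex : ∃ i, ∃ x ∈ G.U1lim η Q, x ∉ Q ∧ x ∉ G.U2 η Q i := by
      refine ⟨Fintype.card α, x0, hx0, hx0Q, fun hmem => ?_⟩
      obtain ⟨y, hy, hle⟩ := hη.2 (G.U2 η Q (Fintype.card α))
        ((hU2 _).trans (hV1 _)) ⟨x0, hmem⟩
      have hy' := hy
      rw [← hst2] at hy'
      simp only [Sandpile.Graph.U2, Finset.mem_filter] at hy'
      omega
    obtain ⟨i, ⟨x, hxU, hxQ, hxi⟩, hmin⟩ :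
        ∃ i, (∃ x ∈ G.U1lim η Q, x ∉ Q ∧ x ∉ G.U2 η Q i) ∧
          ∀ k < i, ∀ y ∈ G.U1lim η Q, y ∉ Q → y ∈ G.U2 η Q k := by
      refine ⟨Nat.find hex, Nat.find_spec hex, ?_⟩
      intro k hk y hy hyQ
      by_contra hc
      exact Nat.find_min hex hk ⟨y, hy, hyQ, hc⟩
    have hburn : ∀ k, x ∈ G.U2 η Q k → x ∉ G.U2 η Q (k + 1) →
        G.degIn (G.U2 η Q k) x ≤ η x := by
      intro k h1 h2
      by_contra hc
      apply h2
      simp only [Sandpile.Graph.U2, Finset.mem_filter]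
      exact ⟨h1, by omega⟩
    obtain _ | _ | m := i
    · exact hxi hxU
    · have h1 := hburn 0 hxU hxi
      have h2 : x ∈ G.U1 η Q (Fintype.card α + 1) := by rw [hst1]; exact hxU
      simp only [Sandpile.Graph.U1, Finset.mem_filter] at h2
      have h3 := h2.2.resolve_left hxQ
      simp only [Sandpile.Graph.U2, Sandpile.Graph.U1lim] at h1
      omega
    · have htime : G.p2time η Q x = m + 2 := by
        apply le_antisymm (Nat.sInf_le hxi)
        by_contra hc
        exact Nat.sInf_mem (s := {i : ℕ | x ∉ G.U2 η Q i}) ⟨_, hxi⟩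
          (hmin _ (not_le.mp hc) x hxU hxQ)
      have hx1 := hmin (m + 1) (by omega) x hxU hxQ
      have hle := hburn (m + 1) hx1 hxi
      have hlt : η x < G.degIn (G.U2 η Q m) x := by
        simp only [Sandpile.Graph.U2, Finset.mem_filter] at hx1
        exact hx1.2
      have hprev : G.prevBurnt η Q x = G.U2 η Q m \ G.U2 η Q (m + 1) := by
        unfold Sandpile.Graph.prevBurnt
        rw [if_pos hxU, htime]
        rfl
      have hbb : G.burntBefore η Q x = Finset.univ \ G.U2 η Q (m + 1) := by
        unfold Sandpile.Graph.burntBefore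
        rw [if_pos hxU, htime]
        rfl
      have hd1 : G.degIn (G.prevBurnt η Q x) x + G.degIn (G.U2 η Q (m + 1)) x
          = G.degIn (G.U2 η Q m) x := by
        rw [hprev]
        exact Finset.sum_sdiff (hs2 m)
      have hd2 : G.degIn (G.burntBefore η Q x) x + G.degIn (G.U2 η Q (m + 1)) x
          = G.deg x := by
        rw [hbb]
        exact Finset.sum_sdiff (Finset.subset_univ _)
      obtain ⟨P, hPc, hP⟩ := s17_edges G x (G.prevBurnt η Q x)
      obtain ⟨e, heP, he⟩ := s17_rank P (lt x) (hirr x) (htrans x)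
        (fun e he f hf => htri x e f ((hP e).mp he).1 ((hP f).mp hf).1)
        (G.jX η Q x) (by unfold Sandpile.Graph.jX; omega)
      have heP' := (hP e).mp heP
      have hspec : G.EdgeSpec lt η Q x e := by
        refine ⟨heP'.1, heP'.2, ?_⟩
        rw [← he, ← Set.ncard_coe_finset]
        congr 1
        ext f
        simp only [Set.mem_setOf_eq, Finset.coe_filter, hP, and_assoc]
      have hne := h e ⟨x, hV1 _ hxU, hspec⟩ (by rw [heP'.1]; exact hxQ)
      have hmem := heP'.2
      rw [hprev] at hmem
      obtain ⟨h1, h2⟩ := Finset.mem_sdiff.mp hmem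
      exact h2 (hmin (m + 1) (by omega) _ (hU2 _ h1) hne)
end
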